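/- Let V : ℝⁿ → ℝ be C² with e^{-V} integrable and μ the probability measure with density proportional to e^{-V}. Let ρ : ℝⁿ → ℝ be continuous with ⟨u, Hess V(x) u⟩ ≥ ρ(x)‖u‖² for all x, u, ρ ≥ ρ₀ for some ρ₀ ∈ ℝ, and m := ∫ρ dμ > 0. Let c : ℝⁿ×ℝⁿ → [0,∞] be a lower semicontinuous symmetric cost with c(x,x)=0, and suppose L := ‖ρ‖_c = sup_{x≠y}|ρ(x)−ρ(y)|/c(x,y) < ∞. Let α : [0,∞) → [0,∞) be continuous, increasing, with α(0)=0, and suppose the transport-information inequality α(T_c(ν,μ)) ≤ I(ν|μ) holds for every probability measure ν = f·μ with f positive and C¹. If m > α*(2L)/2, then for every smooth compactly supported g, Var_μ(g) ≤ (1/(m − α*(2L)/2)) ∫‖∇g‖² dμ. -/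

import Mathlib

open MeasureTheory Real Set
open scoped ENNReal RealInnerProductSpace

/-- The transportation cost `T_c(ν,μ)`: infimum of `∫ c dπ` over couplings `π` of `ν` and `μ`. -/
noncomputable def transportCost {E : Type*} [MeasurableSpace E]
    (c : E → E → ℝ≥0∞) (ν μ : MeasureTheory.Measure E) : ℝ≥0∞ :=
  ⨅ cpl ∈ {cpl : MeasureTheory.Measure (E × E) |
      cpl.map Prod.fst = ν ∧ cpl.map Prod.snd = μ ∧ MeasureTheory.IsProbabilityMeasure cpl},
    ∫⁻ p, c p.1 p.2 ∂cpl

/-- The norm `‖ρ‖_c = sup_{x ≠ y} |ρ(x) - ρ(y)| / c(x,y)` (the diagonal contributes `0/0 = 0`). -/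
noncomputable def costLipNorm {E : Type*} (c : E → E → ℝ≥0∞) (ρ : E → ℝ) : ℝ≥0∞ :=
  ⨆ x, ⨆ y, ENNReal.ofReal |ρ x - ρ y| / c x y


open MeasureTheory Real Set
open scoped ENNReal RealInnerProductSpace

abbrev EE (n : ℕ) := EuclideanSpace ℝ (Fin n)

noncomputable def pd {n : ℕ} (i : Fin n) (f : EE n → ℝ) : EE n → ℝ :=
  fun x => fderiv ℝ f x (EuclideanSpace.single i 1)

theorem fderiv_eq_sum_pd {n : ℕ} (f : EE n → ℝ) (x v : EE n) :
    fderiv ℝ f x v = ∑ i, v i * pd i f x := by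
  have h : v = ∑ i, v i • (EuclideanSpace.single i (1:ℝ) : EE n) := by
    ext j
    simp [Finset.sum_apply, Pi.single_apply]
  conv_lhs => rw [h]
  simp [map_sum, pd]

theorem gradient_apply_pd {n : ℕ} (f : EE n → ℝ) (x : EE n) (i : Fin n) :
    gradient f x i = pd i f x := by
  have h : inner ℝ (gradient f x) (EuclideanSpace.single i (1:ℝ) : EE n) = pd i f x := by
    simp only [gradient, InnerProductSpace.toDual_symm_apply, pd]
  rw [EuclideanSpace.inner_single_right] at h; simpa using h

theorem norm_gradient_sq {n : ℕ} (f : EE n → ℝ) (x : EE n) :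
    ‖gradient f x‖ ^ 2 = ∑ i, (pd i f x) ^ 2 := by
  rw [EuclideanSpace.norm_sq_eq]
  simp [gradient_apply_pd]

theorem pd_contDiff {n : ℕ} (i : Fin n) {f : EE n → ℝ} {k l : WithTop ℕ∞}
    (hf : ContDiff ℝ l f) (h : k + 1 ≤ l) : ContDiff ℝ k (pd i f) := by
  unfold pd
  exact (hf.fderiv_right h).clm_apply contDiff_const

theorem pd_continuous {n : ℕ} (i : Fin n) {f : EE n → ℝ}
    (hf : ContDiff ℝ 1 f) : Continuous (pd i f) :=
  (pd_contDiff (k := 0) i hf (by norm_num)).continuous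

theorem pd_compact {n : ℕ} (i : Fin n) {f : EE n → ℝ} (hf : HasCompactSupport f) :
    HasCompactSupport (pd i f) := by
  unfold pd
  exact hf.fderiv_apply ℝ _

theorem pd_mul {n : ℕ} (i : Fin n) {f g : EE n → ℝ}
    (hf : ContDiff ℝ 1 f) (hg : ContDiff ℝ 1 g) (x : EE n) :
    pd i (fun y => f y * g y) x = pd i f x * g x + f x * pd i g x := by
  unfold pd
  rw [fderiv_fun_mul (hf.differentiable one_ne_zero x) (hg.differentiable one_ne_zero x)]
  simp; ring

theorem pd_add {n : ℕ} (i : Fin n) {f g : EE n → ℝ}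
    (hf : ContDiff ℝ 1 f) (hg : ContDiff ℝ 1 g) (x : EE n) :
    pd i (fun y => f y + g y) x = pd i f x + pd i g x := by
  unfold pd
  rw [fderiv_fun_add (hf.differentiable one_ne_zero x) (hg.differentiable one_ne_zero x)]
  simp

theorem pd_sub {n : ℕ} (i : Fin n) {f g : EE n → ℝ}
    (hf : ContDiff ℝ 1 f) (hg : ContDiff ℝ 1 g) (x : EE n) :
    pd i (fun y => f y - g y) x = pd i f x - pd i g x := by
  unfold pd
  rw [fderiv_fun_sub (hf.differentiable one_ne_zero x) (hg.differentiable one_ne_zero x)]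
  simp

theorem pd_sum {n : ℕ} {ι : Type*} (s : Finset ι) (i : Fin n) {f : ι → EE n → ℝ}
    (hf : ∀ j, ContDiff ℝ 1 (f j)) (x : EE n) :
    pd i (fun y => ∑ j ∈ s, f j y) x = ∑ j ∈ s, pd i (f j) x := by
  unfold pd
  rw [fderiv_fun_sum (fun j _ => (hf j).differentiable one_ne_zero x)]
  simp

theorem pd_exp {n : ℕ} (i : Fin n) {f : EE n → ℝ} (hf : ContDiff ℝ 1 f) (x : EE n) :
    pd i (fun y => Real.exp (f y)) x = Real.exp (f x) * pd i f x := by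
  unfold pd
  rw [fderiv_exp (hf.differentiable one_ne_zero x)]
  simp

theorem pd_neg {n : ℕ} (i : Fin n) {f : EE n → ℝ} (x : EE n) :
    pd i (fun y => - f y) x = - pd i f x := by
  unfold pd
  rw [fderiv_fun_neg]
  simp

theorem pd_comm {n : ℕ} (i j : Fin n) {f : EE n → ℝ} (hf : ContDiff ℝ 2 f) (x : EE n) :
    pd i (pd j f) x = pd j (pd i f) x := by
  have hs : IsSymmSndFDerivAt ℝ f x := hf.contDiffAt.isSymmSndFDerivAt (by simp)
  have h1 : DifferentiableAt ℝ (fderiv ℝ f) x :=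
    (hf.fderiv_right (m := 1) (by norm_num)).differentiable one_ne_zero x
  unfold pd
  rw [fderiv_clm_apply h1 (by fun_prop), fderiv_clm_apply h1 (by fun_prop)]
  simpa using hs _ _

theorem pd_pd_eq {n : ℕ} {f : EE n → ℝ} (hf : ContDiff ℝ 2 f) (x u : EE n) :
    iteratedFDeriv ℝ 2 f x ![u, u] = ∑ i, ∑ j, u i * u j * pd i (pd j f) x := by
  have h1 : DifferentiableAt ℝ (fderiv ℝ f) x :=
    (hf.fderiv_right (m := 1) (by norm_num)).differentiable one_ne_zero x
  have h2 : ∀ v w, fderiv ℝ (fderiv ℝ f) x v w = fderiv ℝ (fun y => fderiv ℝ f y w) x v := by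
    intro v w
    rw [fderiv_clm_apply h1 (by fun_prop)]
    simp
  rw [iteratedFDeriv_two_apply]
  simp only [Matrix.cons_val_zero, Matrix.cons_val_one]
  rw [h2]
  have h3 : (fun y => fderiv ℝ f y u) = fun y => ∑ j, u j * pd j f y := by
    ext y; exact fderiv_eq_sum_pd f y u
  rw [h3, fderiv_eq_sum_pd]
  refine Finset.sum_congr rfl fun i _ => ?_
  rw [pd_sum _ _ (fun j => contDiff_const.mul (pd_contDiff j hf (by norm_num))), Finset.mul_sum]
  refine Finset.sum_congr rfl fun j _ => ?_
  rw [pd_mul i contDiff_const (pd_contDiff j hf (by norm_num))]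
  simp [pd]; ring

theorem cc_integrable {n : ℕ} {f : EE n → ℝ} (hf : Continuous f) (hc : HasCompactSupport f) :
    Integrable f := hf.integrable_of_hasCompactSupport hc

theorem ibp {n : ℕ} (i : Fin n) {f g : EE n → ℝ} (hf : ContDiff ℝ 1 f) (hg : ContDiff ℝ 1 g)
    (hc : HasCompactSupport g) : ∫ x, f x * pd i g x = - ∫ x, pd i f x * g x := by
  unfold pd
  refine integral_mul_fderiv_eq_neg_fderiv_mul_of_integrable ?_ ?_ ?_
    (fun x _ => hf.differentiable one_ne_zero x) (fun x _ => hg.differentiable one_ne_zero x)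
  · exact cc_integrable ((pd_continuous i hf).mul hg.continuous) hc.mul_left
  · exact cc_integrable (hf.continuous.mul (pd_continuous i hg)) (pd_compact i hc).mul_left
  · exact cc_integrable (hf.continuous.mul hg.continuous) hc.mul_left

/-- the generator -/
noncomputable def gen {n : ℕ} (W φ : EE n → ℝ) : EE n → ℝ :=
  fun x => ∑ i, (pd i (pd i φ) x - pd i W x * pd i φ x)

theorem gen_contDiff {n : ℕ} {W φ : EE n → ℝ} (hW : ContDiff ℝ 2 W) (hφ : ContDiff ℝ 3 φ) :
    ContDiff ℝ 1 (gen W φ) := by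
  unfold gen
  refine ContDiff.sum fun i _ => ?_
  exact (pd_contDiff i (pd_contDiff (k := 2) i hφ (by norm_num)) (by norm_num)).sub
    ((pd_contDiff i hW (by norm_num)).mul (pd_contDiff i hφ (by norm_num)))

theorem gen_compact {n : ℕ} {W φ : EE n → ℝ} (hc : HasCompactSupport φ) :
    HasCompactSupport (gen W φ) := by
  have h : gen W φ = fun x => ∑ i ∈ Finset.univ, (pd i (pd i φ) x - pd i W x * pd i φ x) := rfl
  refine HasCompactSupport.intro (K := tsupport φ) hc fun x hx => ?_
  have h1 : ∀ i, pd i φ x = 0 := fun i => by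
    by_contra h
    exact hx (tsupport_fderiv_subset ℝ (subset_tsupport _ (a := x) (by
      intro h'; apply h; unfold pd; rw [h']; rfl)))
  have h0 : x ∉ tsupport (fderiv ℝ φ) := fun h => hx (tsupport_fderiv_subset ℝ h)
  have h2 : ∀ i, pd i (pd i φ) x = 0 := fun i => by
    have : pd i φ =ᶠ[nhds x] fun _ => 0 := by
      filter_upwards [notMem_tsupport_iff_eventuallyEq.1 h0] with y hy
      unfold pd; rw [hy]; rfl
    conv_lhs => unfold pd
    change fderiv ℝ (pd i φ) x _ = 0
    rw [this.fderiv_eq]; simp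
  rw [h]; simp [h1, h2]

theorem pd_weight {n : ℕ} (i : Fin n) {W f : EE n → ℝ} (hW : ContDiff ℝ 2 W)
    (hf : ContDiff ℝ 1 f) (x : EE n) :
    pd i (fun y => f y * Real.exp (-W y)) x = (pd i f x - pd i W x * f x) * Real.exp (-W x) := by
  have hW1 : ContDiff ℝ 1 W := hW.of_le (by norm_num)
  rw [pd_mul i hf hW1.neg.exp, pd_exp i hW1.neg, pd_neg]
  ring

/-- integration by parts for the generator -/
theorem gen_ibp {n : ℕ} {W φ f : EE n → ℝ} (hW : ContDiff ℝ 2 W) (hφ : ContDiff ℝ 2 φ)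
    (hc : HasCompactSupport φ) (hf : ContDiff ℝ 1 f) :
    ∫ x, f x * gen W φ x * Real.exp (-W x)
      = - ∫ x, (∑ i, pd i f x * pd i φ x) * Real.exp (-W x) := by
  have hW1 : ContDiff ℝ 1 W := hW.of_le (by norm_num)
  have hφi : ∀ i, ContDiff ℝ 1 (pd i φ) := fun i => pd_contDiff i hφ (by norm_num)
  have hg : ∀ i, ContDiff ℝ 1 (fun y => pd i φ y * Real.exp (-W y)) :=
    fun i => (hφi i).mul hW1.neg.exp
  have hgc : ∀ i, HasCompactSupport (fun y => pd i φ y * Real.exp (-W y)) :=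
    fun i => (pd_compact i hc).mul_right
  have e1 : (fun x => f x * gen W φ x * Real.exp (-W x)) = fun x => ∑ i, f x *
      pd i (fun y => pd i φ y * Real.exp (-W y)) x := by
    ext x
    simp only [gen, Finset.mul_sum, Finset.sum_mul]
    refine Finset.sum_congr rfl fun i _ => ?_
    rw [pd_weight i hW (hφi i)]; ring
  have e2 : (fun x => (∑ i, pd i f x * pd i φ x) * Real.exp (-W x)) = fun x => ∑ i, pd i f x *
      (fun y => pd i φ y * Real.exp (-W y)) x := by
    ext x
    simp only [Finset.sum_mul]
    refine Finset.sum_congr rfl fun i _ => ?_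
    ring
  rw [e1, e2, integral_finsetSum, integral_finsetSum, ← Finset.sum_neg_distrib]
  · exact Finset.sum_congr rfl fun i _ => ibp i hf (hg i) (hgc i)
  · exact fun i _ => cc_integrable ((pd_continuous i hf).mul (hg i).continuous) (hgc i).mul_left
  · exact fun i _ => cc_integrable (hf.continuous.mul (pd_continuous i (hg i)))
      (pd_compact i (hgc i)).mul_left

theorem pd_gen {n : ℕ} (i : Fin n) {W φ : EE n → ℝ} (hW : ContDiff ℝ 2 W) (hφ : ContDiff ℝ 3 φ)
    (x : EE n) : pd i (gen W φ) x = gen W (pd i φ) x - ∑ j, pd i (pd j W) x * pd j φ x := by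
  have hφj : ∀ j, ContDiff ℝ 2 (pd j φ) := fun j => pd_contDiff j hφ (by norm_num)
  have hφj1 : ∀ j, ContDiff ℝ 1 (pd j φ) := fun j => (hφj j).of_le (by norm_num)
  have hφjj : ∀ j, ContDiff ℝ 1 (pd j (pd j φ)) := fun j => pd_contDiff j (hφj j) (by norm_num)
  have hWj : ∀ j, ContDiff ℝ 1 (pd j W) := fun j => pd_contDiff j hW (by norm_num)
  unfold gen
  rw [pd_sum _ _ (fun j => (hφjj j).sub ((hWj j).mul (hφj1 j))), ← Finset.sum_sub_distrib]
  refine Finset.sum_congr rfl fun j _ => ?_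
  rw [pd_sub i (hφjj j) ((hWj j).mul (hφj1 j)), pd_mul i (hWj j) (hφj1 j), pd_comm i j (hφj j)]
  have h : pd i (pd j φ) = pd j (pd i φ) := funext fun y => pd_comm i j (hφ.of_le (by norm_num)) y
  rw [h]; ring

theorem bochner {n : ℕ} {W φ : EE n → ℝ} (hW : ContDiff ℝ 2 W) (hφ : ContDiff ℝ 3 φ)
    (hc : HasCompactSupport φ) :
    ∫ x, gen W φ x ^ 2 * Real.exp (-W x) =
      ∫ x, ((∑ i, ∑ j, pd j (pd i φ) x ^ 2)
        + ∑ i, ∑ j, pd i φ x * pd j φ x * pd i (pd j W) x) * Real.exp (-W x) := by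
  have hW1 : ContDiff ℝ 1 W := hW.of_le (by norm_num)
  have hec : Continuous fun x => Real.exp (-W x) := hW1.neg.exp.continuous
  have hφ2 : ContDiff ℝ 2 φ := hφ.of_le (by norm_num)
  have hφj : ∀ j, ContDiff ℝ 2 (pd j φ) := fun j => pd_contDiff j hφ (by norm_num)
  have hφj1 : ∀ j, ContDiff ℝ 1 (pd j φ) := fun j => (hφj j).of_le (by norm_num)
  have hgi : ∀ i, Continuous (gen W (pd i φ)) := fun i => by
    unfold gen
    exact continuous_finsetSum _ fun j _ =>
      ((pd_continuous j (pd_contDiff j (hφj i) (by norm_num))).sub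
        ((pd_continuous j hW1).mul (pd_continuous j (hφj1 i))))
  have hWij : ∀ i j, Continuous (pd i (pd j W)) := fun i j =>
    pd_continuous i (pd_contDiff j hW (by norm_num))
  have e0 : (fun x => gen W φ x ^ 2 * Real.exp (-W x)) =
      fun x => gen W φ x * gen W φ x * Real.exp (-W x) := by ext x; ring
  rw [e0, gen_ibp hW hφ2 hc (gen_contDiff hW hφ)]
  have e1 : (fun x => (∑ i, pd i (gen W φ) x * pd i φ x) * Real.exp (-W x)) =
      fun x => (∑ i, pd i φ x * gen W (pd i φ) x * Real.exp (-W x)) -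
        (∑ i, ∑ j, pd i φ x * pd j φ x * pd i (pd j W) x) * Real.exp (-W x) := by
    ext x
    simp only [pd_gen _ hW hφ, Finset.sum_mul, ← Finset.sum_sub_distrib]
    refine Finset.sum_congr rfl fun i _ => ?_
    rw [sub_mul, sub_mul, Finset.sum_mul, Finset.sum_mul]
    congr 1
    · ring
    · exact Finset.sum_congr rfl fun j _ => by ring
  have i1 : ∀ i, Integrable (fun x => pd i φ x * gen W (pd i φ) x * Real.exp (-W x)) := fun i =>
    cc_integrable (((hφj i).continuous.mul (hgi i)).mul hec) ((pd_compact i hc).mul_right.mul_right)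
  have i2 : Integrable (fun x => (∑ i, ∑ j, pd i φ x * pd j φ x * pd i (pd j W) x) *
      Real.exp (-W x)) := by
    simp only [Finset.sum_mul]
    exact integrable_finsetSum _ fun i _ => integrable_finsetSum _ fun j _ =>
      cc_integrable ((((hφj i).continuous.mul (hφj j).continuous).mul (hWij i j)).mul hec)
        ((pd_compact i hc).mul_right.mul_right.mul_right)
  have i3 : ∀ i, Integrable (fun x => (∑ j, pd j (pd i φ) x * pd j (pd i φ) x) *
      Real.exp (-W x)) := fun i => by
    simp only [Finset.sum_mul]
    exact integrable_finsetSum _ fun j _ =>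
      cc_integrable (((pd_continuous j (hφj1 i)).mul (pd_continuous j (hφj1 i))).mul hec)
        ((pd_compact j (pd_compact i hc)).mul_right.mul_right)
  rw [e1, integral_sub (integrable_finsetSum _ fun i _ => i1 i) i2, integral_finsetSum _ fun i _ => i1 i]
  have e2 : ∀ i, ∫ x, pd i φ x * gen W (pd i φ) x * Real.exp (-W x) =
      - ∫ x, (∑ j, pd j (pd i φ) x * pd j (pd i φ) x) * Real.exp (-W x) := fun i =>
    gen_ibp hW (hφj i) (pd_compact i hc) (hφj1 i)
  simp only [e2, add_mul]
  have e3 : (fun x => (∑ i, ∑ j, pd j (pd i φ) x ^ 2) * Real.exp (-W x)) =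
     fun x => ∑ i, (∑ j, pd j (pd i φ) x * pd j (pd i φ) x) * Real.exp (-W x) := by
    ext x; rw [Finset.sum_mul]; simp only [sq]
  rw [integral_add _ i2, e3, integral_finsetSum _ fun i _ => i3 i, Finset.sum_neg_distrib]
  · ring
  · rw [e3]; exact integrable_finsetSum _ fun i _ => i3 i

open MeasureTheory Real Set
open scoped ENNReal RealInnerProductSpace

structure Moll {n : ℕ} (η : EE n → ℝ) (ε : ℝ) : Prop where
  smooth : ContDiff ℝ (⊤ : ℕ∞) η
  cpt : HasCompactSupport η
  nonneg : ∀ x, 0 ≤ η x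
  even : ∀ x, η (-x) = η x
  int : ∫ x, η x = 1
  supp : ∀ x, η x ≠ 0 → ‖x‖ < ε

theorem moll_bump {n : ℕ} (b : ContDiffBump (0 : EE n)) : Moll (b.normed volume) b.rOut where
  smooth := b.contDiff_normed
  cpt := b.hasCompactSupport_normed
  nonneg := b.nonneg_normed
  even := b.normed_neg
  int := b.integral_normed
  supp := fun x hx => by
    have : x ∈ Function.support (b.normed volume) := hx
    rw [b.support_normed_eq] at this
    simpa using this

theorem moll_exists {n : ℕ} {ε : ℝ} (hε : 0 < ε) : ∃ η : EE n → ℝ, Moll η ε :=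
  ⟨_, moll_bump ⟨ε / 2, ε, by positivity, by linarith⟩⟩

noncomputable def mol {n : ℕ} (η w : EE n → ℝ) : EE n → ℝ := fun x => ∫ y, w y * η (x - y)

theorem mol_eq {n : ℕ} (η w : EE n → ℝ) :
    mol η w = convolution w η (ContinuousLinearMap.lsmul ℝ ℝ) volume := by
  ext x; simp [mol, convolution]

theorem mol_contDiff {n : ℕ} {η w : EE n → ℝ} (hη : ContDiff ℝ (⊤ : ℕ∞) η)
    (hc : HasCompactSupport η) (hw : LocallyIntegrable w) : ContDiff ℝ (⊤ : ℕ∞) (mol η w) := by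
  rw [mol_eq]
  exact hc.contDiff_convolution_right _ hw hη

theorem pd_mol {n : ℕ} (i : Fin n) {η w : EE n → ℝ} (hη : ContDiff ℝ (⊤ : ℕ∞) η)
    (hc : HasCompactSupport η) (hw : LocallyIntegrable w) : pd i (mol η w) = mol (pd i η) w := by
  have hη1 : ContDiff ℝ 1 η := hη.of_le (by exact_mod_cast le_top)
  ext x
  unfold pd
  rw [mol_eq, mol_eq, (hc.hasFDerivAt_convolution_right _ hw hη1 x).fderiv,
    convolution_precompR_apply _ hw (hc.fderiv ℝ) (hη1.continuous_fderiv one_ne_zero)]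

theorem pd_smooth {n : ℕ} (i : Fin n) {η : EE n → ℝ} (hη : ContDiff ℝ (⊤ : ℕ∞) η) :
    ContDiff ℝ (⊤ : ℕ∞) (pd i η) := pd_contDiff i hη (by exact_mod_cast le_top)

theorem shift_smooth {n : ℕ} {η : EE n → ℝ} (hη : ContDiff ℝ (⊤ : ℕ∞) η) (x : EE n) :
    ContDiff ℝ (⊤ : ℕ∞) (fun y => η (x - y)) := hη.comp (contDiff_const.sub contDiff_id)

theorem shift_cpt {n : ℕ} {η : EE n → ℝ} (hη : HasCompactSupport η) (x : EE n) :
    HasCompactSupport (fun y => η (x - y)) :=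
  hη.comp_homeomorph (Homeomorph.subLeft x)

theorem pd_shift {n : ℕ} (i : Fin n) {η : EE n → ℝ} (hη : ContDiff ℝ 1 η) (x : EE n) :
    pd i (fun y => η (x - y)) = fun y => - pd i η (x - y) := by
  ext y
  unfold pd
  have h1 : HasFDerivAt (fun y : EE n => x - y) (- ContinuousLinearMap.id ℝ (EE n)) y := by
    simpa using (hasFDerivAt_id y).const_sub x
  have h2 := ((hη.differentiable one_ne_zero (x - y)).hasFDerivAt).comp y h1
  have h3 := h2.fderiv
  simp only [Function.comp_def] at h3
  rw [h3]; simp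

theorem mol_integrand {n : ℕ} {η w : EE n → ℝ} (hη : Continuous η)
    (hc : HasCompactSupport η) (hw : LocallyIntegrable w) (x : EE n) :
    Integrable fun y => w y * η (x - y) := by
  have := hw.integrable_smul_right_of_hasCompactSupport (g := fun y => η (x - y))
    (hη.comp (continuous_const.sub continuous_id)) (shift_cpt hc x)
  simpa using this

theorem moll_int {n : ℕ} {η : EE n → ℝ} {ε : ℝ} (h : Moll η ε) (x : EE n) :
    ∫ y, η (x - y) = 1 := by
  rw [integral_sub_left_eq_self, h.int]

theorem mol_fubini {n : ℕ} {η w k : EE n → ℝ} {ε : ℝ} (h : Moll η ε) (hw : LocallyIntegrable w)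
    (hk : Continuous k) (hkc : HasCompactSupport k) :
    ∫ x, mol η w x * k x = ∫ y, w y * mol η k y := by
  have hηc : Continuous η := h.smooth.continuous
  have hsub : ∀ x y : EE n, η (x - y) = η (y - x) := fun x y => by rw [← h.even (x - y), neg_sub]
  have key : Integrable (Function.uncurry fun x y => w y * η (x - y) * k x)
      ((volume : Measure (EE n)).prod volume) := by
    rw [integrable_prod_iff']
    · constructor
      · refine Filter.Eventually.of_forall fun y => ?_
        simp only [Function.uncurry]
        exact cc_integrable (by fun_prop) hkc.mul_left
      · simp only [Function.uncurry]
        have e : (fun y => ∫ x, ‖w y * η (x - y) * k x‖) = fun y => |w y| • mol η (fun x => |k x|) y := by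
          ext y
          simp only [mol, smul_eq_mul, ← integral_const_mul]
          refine integral_congr_ae (Filter.Eventually.of_forall fun x => ?_)
          simp only [norm_mul, Real.norm_eq_abs]
          rw [abs_of_nonneg (h.nonneg (x - y)), hsub x y]; ring
        rw [e]
        have hkl : LocallyIntegrable (fun x => |k x|) := hk.abs.locallyIntegrable
        have hwa : LocallyIntegrable (fun x => |w x|) :=
          hw.mono hw.aestronglyMeasurable.norm (Filter.Eventually.of_forall fun x => by simp)
        refine hwa.integrable_smul_right_of_hasCompactSupport
          (mol_contDiff h.smooth h.cpt hkl).continuous ?_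
        rw [mol_eq]
        exact HasCompactSupport.convolution _ (hkc.comp_left (g := fun t => |t|) abs_zero) h.cpt
    · have h1 : AEStronglyMeasurable (fun p : EE n × EE n => w p.2)
          ((volume : Measure (EE n)).prod volume) := hw.aestronglyMeasurable.comp_snd
      have h2 : Continuous fun p : EE n × EE n => η (p.1 - p.2) := by fun_prop
      have h3 : Continuous fun p : EE n × EE n => k p.1 := by fun_prop
      exact (h1.mul h2.aestronglyMeasurable).mul h3.aestronglyMeasurable
  have e1 : ∀ x, mol η w x * k x = ∫ y, w y * η (x - y) * k x := fun x => by
    rw [integral_mul_const, mol]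
  have e2 : ∀ y, w y * mol η k y = ∫ x, w y * η (x - y) * k x := fun y => by
    rw [mol, ← integral_const_mul]
    refine integral_congr_ae (Filter.Eventually.of_forall fun x => ?_)
    simp only [hsub x y]; ring
  simp only [e1, e2]
  exact integral_integral_swap key

/-- weak convergence of mollifications -/
theorem mol_weak {n : ℕ} {w k : EE n → ℝ} (hw : LocallyIntegrable w)
    (hk : Continuous k) (hkc : HasCompactSupport k) {δ : ℝ} (hδ : 0 < δ) :
    ∃ ε₀ > 0, ∀ η ε, ε ≤ ε₀ → Moll η ε →
      |(∫ x, mol η w x * k x) - ∫ y, w y * k y| ≤ δ := by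
  set K' := Metric.cthickening 1 (tsupport k) with hK'
  have hK'c : IsCompact K' := hkc.isCompact.cthickening
  have hwi : IntegrableOn w K' := hw.integrableOn_isCompact hK'c
  set D := ∫ y in K', |w y| with hD
  have hD0 : 0 ≤ D := integral_nonneg fun y => abs_nonneg _
  have huc := hkc.uniformContinuous_of_continuous hk
  obtain ⟨ε₁, hε₁, hu⟩ := Metric.uniformContinuous_iff.1 huc (δ / (1 + D)) (by positivity)
  refine ⟨min ε₁ 1, by positivity, fun η ε hε h => ?_⟩
  have hηc : Continuous η := h.smooth.continuous
  have hkl : LocallyIntegrable k := hk.locallyIntegrable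
  have hmc : Continuous (mol η k) := (mol_contDiff h.smooth h.cpt hkl).continuous
  have hms : HasCompactSupport (mol η k) := by
    rw [mol_eq]; exact HasCompactSupport.convolution _ hkc h.cpt
  have hb : ∀ y, |mol η k y - k y| ≤ δ / (1 + D) := by
    intro y
    have e : mol η k y - k y = ∫ x, (k x - k y) * η (y - x) := by
      simp only [sub_mul]
      rw [integral_sub (mol_integrand hηc h.cpt hkl y), integral_const_mul, moll_int h, mul_one, mol]
      exact (cc_integrable (by fun_prop) (shift_cpt h.cpt y)).const_mul _
    rw [e, ← Real.norm_eq_abs]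
    have : ∫ x, δ / (1 + D) * η (y - x) = δ / (1 + D) := by
      rw [integral_const_mul, moll_int h, mul_one]
    rw [← this]
    refine norm_integral_le_of_norm_le
      ((cc_integrable (by fun_prop) (shift_cpt h.cpt y)).const_mul _)
      (Filter.Eventually.of_forall fun x => ?_)
    rw [norm_mul, Real.norm_of_nonneg (h.nonneg _)]
    by_cases hx : η (y - x) = 0
    · simp [hx]
    · have h1 := h.supp _ hx
      have h2 : dist x y < ε₁ := by
        rw [dist_comm, dist_eq_norm]; exact lt_of_lt_of_le h1 (hε.trans (min_le_left _ _))
      have := hu h2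
      rw [Real.dist_eq] at this
      exact mul_le_mul_of_nonneg_right this.le (h.nonneg _)
  have hz : ∀ y, y ∉ K' → mol η k y - k y = 0 := by
    intro y hy
    have hy1 : k y = 0 := by
      by_contra hne
      exact hy (Metric.self_subset_cthickening _ (subset_tsupport _ hne))
    have hy2 : mol η k y = 0 := by
      unfold mol
      rw [integral_eq_zero_of_ae]
      refine Filter.Eventually.of_forall fun x => ?_
      by_contra hne
      simp only [Pi.zero_apply, mul_eq_zero, not_or] at hne
      have h1 := h.supp _ hne.2
      refine hy (Metric.mem_cthickening_of_dist_le y x _ _ (subset_tsupport _ hne.1) ?_)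
      rw [dist_eq_norm]; exact h1.le.trans (hε.trans (min_le_right _ _))
    rw [hy1, hy2, sub_zero]
  rw [mol_fubini h hw hk hkc, ← integral_sub]
  · have e2 : ∀ y, w y * mol η k y - w y * k y = w y * (mol η k y - k y) := fun y => by ring
    simp only [e2]
    rw [← Real.norm_eq_abs]
    have hle : ‖∫ y, w y * (mol η k y - k y)‖ ≤ ∫ y, K'.indicator (fun y => δ / (1 + D) * |w y|) y := by
      refine norm_integral_le_of_norm_le ?_ (Filter.Eventually.of_forall fun y => ?_)
      · rw [integrable_indicator_iff hK'c.measurableSet]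
        exact hwi.norm.const_mul _
      · by_cases hy : y ∈ K'
        · rw [indicator_of_mem hy, norm_mul, mul_comm, Real.norm_eq_abs, Real.norm_eq_abs]
          exact mul_le_mul_of_nonneg_right (hb y) (abs_nonneg _)
        · rw [hz y hy, indicator_of_notMem hy]; simp
    refine hle.trans ?_
    rw [integral_indicator hK'c.measurableSet, integral_const_mul, ← hD, div_mul_eq_mul_div,
      div_le_iff₀ (by positivity)]
    nlinarith
  · simpa using hw.integrable_smul_right_of_hasCompactSupport hmc hms
  · simpa using hw.integrable_smul_right_of_hasCompactSupport hk hkc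

/-- functions with vanishing weak gradient are constant -/
theorem weak_const {n : ℕ} {u : EE n → ℝ} (hu : LocallyIntegrable u)
    (h : ∀ (i : Fin n) (θ : EE n → ℝ), ContDiff ℝ (⊤ : ℕ∞) θ → HasCompactSupport θ →
      ∫ x, u x * pd i θ x = 0) : ∃ c : ℝ, ∀ᵐ x, u x = c := by
  have hconst : ∀ η ε, Moll η ε → ∀ x y, mol η u x = mol η u y := by
    intro η ε hη
    have hη1 : ContDiff ℝ 1 η := hη.smooth.of_le (by exact_mod_cast le_top)
    refine is_const_of_fderiv_eq_zero (𝕜 := ℝ)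
      ((mol_contDiff hη.smooth hη.cpt hu).differentiable (by simp)) fun x => ?_
    ext v
    rw [fderiv_eq_sum_pd]
    simp only [zero_apply]
    refine Finset.sum_eq_zero fun i _ => ?_
    rw [pd_mol i hη.smooth hη.cpt hu]
    have := h i (fun y => η (x - y)) (shift_smooth hη.smooth x) (shift_cpt hη.cpt x)
    rw [pd_shift i hη1] at this
    simp only [mul_neg, integral_neg, neg_eq_zero] at this
    rw [mol, this, mul_zero]
  let b : ℕ → ContDiffBump (0 : EE n) := fun m =>
    ⟨1 / ((m : ℝ) + 1), 2 * (1 / ((m : ℝ) + 1)), by positivity, by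
      have : 0 < 1 / ((m : ℝ) + 1) := by positivity
      linarith⟩
  have hb : Filter.Tendsto (fun m => (b m).rOut) Filter.atTop (nhds 0) := by
    have := (tendsto_one_div_add_atTop_nhds_zero_nat (𝕜 := ℝ)).const_mul 2
    rw [mul_zero] at this
    exact this
  have hae := ContDiffBump.ae_convolution_tendsto_right_of_locallyIntegrable (φ := b) (K := 2)
    (μ := (volume : Measure (EE n))) hb (Filter.Eventually.of_forall fun m => le_refl _) hu
  have hcv : ∀ m x, convolution ((b m).normed volume) u (ContinuousLinearMap.lsmul ℝ ℝ) volume x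
      = mol ((b m).normed volume) u x := by
    intro m x
    rw [convolution_lsmul_swap, mol]
    simp only [smul_eq_mul, mul_comm]
  simp only [hcv] at hae
  obtain ⟨x₀, hx₀⟩ := hae.exists
  refine ⟨u x₀, ?_⟩
  filter_upwards [hae] with x hx
  have : (fun m => mol ((b m).normed volume) u x) = fun m => mol ((b m).normed volume) u x₀ :=
    funext fun m => hconst _ _ (moll_bump (b m)) x x₀
  rw [this] at hx
  exact tendsto_nhds_unique hx hx₀

/-- cutoff functions -/
theorem cutoff {n : ℕ} {K : Set (EE n)} (hK : IsCompact K) {δ : ℝ} (hδ : 0 < δ) :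
    ∃ χ : EE n → ℝ, ContDiff ℝ (⊤ : ℕ∞) χ ∧ HasCompactSupport χ ∧ (∀ x, 0 ≤ χ x) ∧ (∀ x, χ x ≤ 1) ∧
      (∀ x ∈ K, χ x = 1) ∧ ∀ x, ∑ i, pd i χ x ^ 2 ≤ δ ^ 2 := by
  let b : ContDiffBump (0 : EE n) := ⟨1, 2, one_pos, one_lt_two⟩
  have hb : ContDiff ℝ (⊤ : ℕ∞) b := b.contDiff
  have hb1 : ContDiff ℝ 1 b := b.contDiff
  have hbc : HasCompactSupport b := b.hasCompactSupport
  have hcont : Continuous fun x => ‖fderiv ℝ b x‖ := (hb1.continuous_fderiv one_ne_zero).norm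
  have hbd : ∃ C, ∀ x, ∑ i, pd i b x ^ 2 ≤ C := by
    have hi : ∀ i : Fin n, ∃ C, ∀ x, ‖pd i b x‖ ≤ C := fun i =>
      (pd_compact i hbc).exists_bound_of_continuous (pd_continuous i hb1)
    choose C hC using hi
    refine ⟨∑ i, C i ^ 2, fun x => Finset.sum_le_sum fun i _ => ?_⟩
    rw [← sq_abs]
    exact pow_le_pow_left₀ (abs_nonneg _) (hC i x) 2
  obtain ⟨C, hC⟩ := hbd
  have hC0 : 0 ≤ C := le_trans (Finset.sum_nonneg fun i _ => sq_nonneg _) (hC 0)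
  obtain ⟨R₁, hR₁⟩ := hK.isBounded.exists_norm_le
  set R := max (max R₁ 1) (Real.sqrt C / δ) with hR
  have hR1 : 1 ≤ R := (le_max_right _ _).trans (le_max_left _ _)
  have hR0 : 0 < R := by linarith
  refine ⟨fun x => b (R⁻¹ • x), hb.comp (contDiff_const_smul R⁻¹), ?_, fun x => b.nonneg,
    fun x => b.le_one, fun x hx => ?_, fun x => ?_⟩
  · exact hbc.comp_homeomorph (Homeomorph.smulOfNeZero R⁻¹ (by positivity))
  · apply b.one_of_mem_closedBall
    simp only [mem_closedBall_zero_iff, norm_smul, norm_inv, Real.norm_of_nonneg hR0.le]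
    change _ ≤ (1 : ℝ)
    rw [inv_mul_le_iff₀ hR0, mul_one]
    exact (hR₁ x hx).trans ((le_max_left _ _).trans (le_max_left _ _))
  · have hpd : ∀ i, pd i (fun x => b (R⁻¹ • x)) x = R⁻¹ * pd i b (R⁻¹ • x) := by
      intro i
      unfold pd
      have h1 : HasFDerivAt (fun y : EE n => R⁻¹ • y) (R⁻¹ • ContinuousLinearMap.id ℝ (EE n)) x :=
        (hasFDerivAt_id x).const_smul R⁻¹
      have h2 := ((hb1.differentiable one_ne_zero (R⁻¹ • x)).hasFDerivAt).comp x h1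
      have h3 := h2.fderiv
      simp only [Function.comp_def] at h3
      rw [h3]; simp
    simp only [hpd, mul_pow, ← Finset.mul_sum]
    have h1 : Real.sqrt C ≤ R * δ := by
      rw [← div_le_iff₀ hδ]; exact le_max_right _ _
    have h2 : C ≤ (R * δ) ^ 2 := by
      rw [← Real.sq_sqrt hC0]; exact pow_le_pow_left₀ (Real.sqrt_nonneg _) h1 2
    rw [inv_pow, inv_mul_le_iff₀ (by positivity)]
    calc _ ≤ C := hC _
      _ ≤ _ := h2
      _ = _ := by ring

open MeasureTheory Real Set
open scoped ENNReal RealInnerProductSpace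

/-- Jensen for mollification -/
theorem jensen {n : ℕ} {η w H k F : EE n → ℝ} {ε B : ℝ} (h : Moll η ε) (hwm : Measurable w)
    (hw : LocallyIntegrable w) (hHm : Measurable H) (hH0 : ∀ y, 0 ≤ H y)
    (hHi : Integrable fun y => H y * w y ^ 2)
    (hB : 0 ≤ B) (hkm : Measurable k) (hk0 : ∀ x, 0 ≤ k x)
    (hkH : ∀ x y, η (x - y) ≠ 0 → k x ≤ B * H y)
    (hFi : Integrable F) (hF0 : ∀ x, 0 ≤ F x)
    (hF : ∀ x, F x ≤ k x * (∫ y, |w y| * η (x - y)) ^ 2) :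
    ∫ x, F x ≤ B * ∫ y, H y * w y ^ 2 := by
  have hηc : Continuous η := h.smooth.continuous
  have hηm : Measurable η := hηc.measurable
  have hwa : LocallyIntegrable (fun x => |w x|) :=
    hw.mono hw.aestronglyMeasurable.norm (Filter.Eventually.of_forall fun x => by simp)
  have hone : ∀ x, ∫⁻ y, ENNReal.ofReal (η (x - y)) = 1 := fun x => by
    rw [← ofReal_integral_eq_lintegral_ofReal
      (cc_integrable (by fun_prop) (shift_cpt h.cpt x))
      (Filter.Eventually.of_forall fun y => h.nonneg _), moll_int h]
    simp
  have hone' : ∀ y, ∫⁻ x, ENNReal.ofReal (η (x - y)) = 1 := fun y => by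
    rw [← hone y]
    refine lintegral_congr fun x => ?_
    rw [← h.even (x - y), neg_sub]
  have hcs : ∀ x, ENNReal.ofReal ((∫ y, |w y| * η (x - y)) ^ 2) ≤
      ∫⁻ y, ENNReal.ofReal (w y ^ 2) * ENNReal.ofReal (η (x - y)) := by
    intro x
    have h0 : 0 ≤ ∫ y, |w y| * η (x - y) :=
      integral_nonneg fun y => mul_nonneg (abs_nonneg _) (h.nonneg _)
    rw [ENNReal.ofReal_pow h0, ofReal_integral_eq_lintegral_ofReal
      (mol_integrand hηc h.cpt hwa x)
      (Filter.Eventually.of_forall fun y => mul_nonneg (abs_nonneg _) (h.nonneg _))]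
    have hol := ENNReal.lintegral_mul_le_Lp_mul_Lq (volume : Measure (EE n))
      (p := 2) (q := 2) Real.HolderConjugate.two_two
      (f := fun y => ENNReal.ofReal (|w y| * Real.sqrt (η (x - y))))
      (g := fun y => ENNReal.ofReal (Real.sqrt (η (x - y))))
      (by fun_prop) (by fun_prop)
    have e1 : ∀ y, ((fun y => ENNReal.ofReal (|w y| * Real.sqrt (η (x - y)))) *
        fun y => ENNReal.ofReal (Real.sqrt (η (x - y)))) y = ENNReal.ofReal (|w y| * η (x - y)) := by
      intro y
      simp only [Pi.mul_apply]
      rw [← ENNReal.ofReal_mul (by positivity), mul_assoc, Real.mul_self_sqrt (h.nonneg _)]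
    have e2 : ∀ y, ENNReal.ofReal (|w y| * Real.sqrt (η (x - y))) ^ (2:ℝ) =
        ENNReal.ofReal (w y ^ 2) * ENNReal.ofReal (η (x - y)) := by
      intro y
      rw [ENNReal.rpow_two, ← ENNReal.ofReal_pow (by positivity), mul_pow, sq_abs,
        Real.sq_sqrt (h.nonneg _), ENNReal.ofReal_mul (sq_nonneg _)]
    have e3 : ∀ y, ENNReal.ofReal (Real.sqrt (η (x - y))) ^ (2:ℝ) = ENNReal.ofReal (η (x - y)) := by
      intro y
      rw [ENNReal.rpow_two, ← ENNReal.ofReal_pow (by positivity), Real.sq_sqrt (h.nonneg _)]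
    simp only [e1, e2, e3] at hol
    rw [hone, ENNReal.one_rpow, mul_one] at hol
    calc _ ≤ ((∫⁻ y, ENNReal.ofReal (w y ^ 2) * ENNReal.ofReal (η (x - y))) ^ (1 / (2:ℝ))) ^ 2 :=
          pow_le_pow_left' hol 2
      _ = _ := by
        rw [← ENNReal.rpow_two, ← ENNReal.rpow_mul]; norm_num
  have hI0 : 0 ≤ B * ∫ y, H y * w y ^ 2 :=
    mul_nonneg hB (integral_nonneg fun y => mul_nonneg (hH0 y) (sq_nonneg _))
  rw [← ENNReal.ofReal_le_ofReal_iff hI0, ofReal_integral_eq_lintegral_ofReal hFi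
    (Filter.Eventually.of_forall hF0), ENNReal.ofReal_mul hB, ofReal_integral_eq_lintegral_ofReal hHi
    (Filter.Eventually.of_forall fun y => mul_nonneg (hH0 y) (sq_nonneg _))]
  calc ∫⁻ x, ENNReal.ofReal (F x)
      ≤ ∫⁻ x, ∫⁻ y, ENNReal.ofReal (k x) * (ENNReal.ofReal (w y ^ 2) * ENNReal.ofReal (η (x - y))) := by
        refine lintegral_mono fun x => ?_
        rw [lintegral_const_mul _ (by fun_prop)]
        refine (ENNReal.ofReal_le_ofReal (hF x)).trans ?_
        rw [ENNReal.ofReal_mul (hk0 x)]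
        exact mul_le_mul_right (hcs x) _
    _ ≤ ∫⁻ x, ∫⁻ y, ENNReal.ofReal (B * (H y * w y ^ 2)) * ENNReal.ofReal (η (x - y)) := by
        refine lintegral_mono fun x => lintegral_mono fun y => ?_
        by_cases hx : η (x - y) = 0
        · simp [hx]
        · rw [← mul_assoc, ← ENNReal.ofReal_mul (hk0 x)]
          refine mul_le_mul_left (ENNReal.ofReal_le_ofReal ?_) _
          rw [← mul_assoc]
          exact mul_le_mul_of_nonneg_right (hkH x y hx) (sq_nonneg _)
    _ = ∫⁻ y, ∫⁻ x, ENNReal.ofReal (B * (H y * w y ^ 2)) * ENNReal.ofReal (η (x - y)) := by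
        refine lintegral_lintegral_swap ?_
        refine Measurable.aemeasurable ?_
        unfold Function.uncurry
        fun_prop
    _ = ∫⁻ y, ENNReal.ofReal B * ENNReal.ofReal (H y * w y ^ 2) := by
        refine lintegral_congr fun y => ?_
        rw [lintegral_const_mul _ (by fun_prop), hone', mul_one, ENNReal.ofReal_mul hB]
    _ = _ := by
        rw [lintegral_const_mul _ (by fun_prop)]

/-- energy estimate -/
theorem energy {n : ℕ} {W v χ : EE n → ℝ} {G R : Fin n → EE n → ℝ} (hW : Continuous W)
    (hv : ContDiff ℝ 1 v) (hχ : ContDiff ℝ 1 χ) (hχc : HasCompactSupport χ)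
    (hR : ∀ i, Continuous (R i))
    (hG : ∀ i x, G i x = Real.exp (-W x) * pd i v x - R i x)
    (hdiv : ∀ ζ : EE n → ℝ, ContDiff ℝ 1 ζ → HasCompactSupport ζ →
      ∫ x, ∑ i, G i x * pd i ζ x = 0) :
    ∫ x, ∑ i, χ x ^ 2 * pd i v x ^ 2 * Real.exp (-W x) ≤
      10 * (∫ x, ∑ i, v x ^ 2 * pd i χ x ^ 2 * Real.exp (-W x)) +
      4 * ∫ x, ∑ i, χ x ^ 2 * R i x ^ 2 * Real.exp (W x) := by
  have hz : ContDiff ℝ 1 fun x => χ x * (χ x * v x) := hχ.mul (hχ.mul hv)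
  have hzc : HasCompactSupport fun x => χ x * (χ x * v x) := hχc.mul_right
  have h0 := hdiv _ hz hzc
  have hGc : ∀ i, Continuous (G i) := fun i => by
    rw [funext (hG i)]
    exact (hW.neg.rexp.mul (pd_continuous i hv)).sub (hR i)
  have hpv := fun i => pd_continuous i hv
  have hpχ := fun i => pd_continuous i hχ
  have hvc := hv.continuous
  have hχcont := hχ.continuous
  have hχ2 : HasCompactSupport fun x => χ x ^ 2 := by
    simp only [sq]; exact hχc.mul_right
  have i0 : Integrable fun x => ∑ i, G i x * pd i (fun x => χ x * (χ x * v x)) x :=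
    integrable_finsetSum _ fun i _ => cc_integrable ((hGc i).mul (pd_continuous i hz))
      (pd_compact i hzc).mul_left
  have i1 : Integrable fun x => ∑ i, χ x ^ 2 * pd i v x ^ 2 * Real.exp (-W x) :=
    integrable_finsetSum _ fun i _ => cc_integrable (((hχcont.pow 2).mul ((hpv i).pow 2)).mul
      hW.neg.rexp) hχ2.mul_right.mul_right
  have i2 : Integrable fun x => ∑ i, v x ^ 2 * pd i χ x ^ 2 * Real.exp (-W x) :=
    integrable_finsetSum _ fun i _ => cc_integrable (((hvc.pow 2).mul ((hpχ i).pow 2)).mul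
      hW.neg.rexp) (by
        have : HasCompactSupport fun x => pd i χ x ^ 2 := by
          simp only [sq]; exact (pd_compact i hχc).mul_right
        exact this.mul_left.mul_right)
  have i3 : Integrable fun x => ∑ i, χ x ^ 2 * R i x ^ 2 * Real.exp (W x) :=
    integrable_finsetSum _ fun i _ => cc_integrable (((hχcont.pow 2).mul ((hR i).pow 2)).mul
      hW.rexp) hχ2.mul_right.mul_right
  have hmono : ∫ x, ∑ i, χ x ^ 2 * pd i v x ^ 2 * Real.exp (-W x) ≤
      ∫ x, (2 * (∑ i, G i x * pd i (fun x => χ x * (χ x * v x)) x) +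
        10 * (∑ i, v x ^ 2 * pd i χ x ^ 2 * Real.exp (-W x)) +
        4 * (∑ i, χ x ^ 2 * R i x ^ 2 * Real.exp (W x))) := by
    refine integral_mono i1 (((i0.const_mul 2).add (i2.const_mul 10)).add (i3.const_mul 4)) ?_
    intro x
    simp only [Finset.mul_sum, ← Finset.sum_add_distrib]
    refine Finset.sum_le_sum fun i _ => ?_
    rw [pd_mul i hχ (hχ.mul hv), pd_mul i hχ hv, hG, Real.exp_neg]
    have he : 0 < Real.exp (W x) := Real.exp_pos _
    generalize Real.exp (W x) = e at he
    generalize χ x = c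
    generalize pd i v x = a
    generalize v x = b
    generalize pd i χ x = d
    generalize R i x = r
    have key : 0 ≤ (2 * ((e⁻¹ * a - r) * (d * (c * b) + c * (d * b + c * a))) +
      10 * (b ^ 2 * d ^ 2 * e⁻¹) + 4 * (c ^ 2 * r ^ 2 * e)) - c ^ 2 * a ^ 2 * e⁻¹ := by
      have : (2 * ((e⁻¹ * a - r) * (d * (c * b) + c * (d * b + c * a))) +
        10 * (b ^ 2 * d ^ 2 * e⁻¹) + 4 * (c ^ 2 * r ^ 2 * e)) - c ^ 2 * a ^ 2 * e⁻¹ =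
        e⁻¹ * (2 * (c * a / 2 + 2 * (b * d)) ^ 2 + 2 * (c * a / 2 - c * r * e) ^ 2 +
          2 * (b * d - c * r * e) ^ 2) := by
        field_simp
        ring
      rw [this]; positivity
    linarith
  have j12 : Integrable fun x => 2 * (∑ i, G i x * pd i (fun x => χ x * (χ x * v x)) x) +
        10 * (∑ i, v x ^ 2 * pd i χ x ^ 2 * Real.exp (-W x)) :=
    (i0.const_mul 2).add (i2.const_mul 10)
  rw [integral_add j12 (i3.const_mul 4),
    integral_add (i0.const_mul 2) (i2.const_mul 10), integral_const_mul, integral_const_mul,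
    integral_const_mul, h0] at hmono
  linarith

theorem uc_compact {n : ℕ} {K : Set (EE n)} (hK : IsCompact K) {f : EE n → ℝ} (hf : Continuous f)
    {δ : ℝ} (hδ : 0 < δ) : ∃ ε > 0, ∀ x ∈ K, ∀ y, ‖x - y‖ < ε → |f x - f y| < δ := by
  have := hK.uniformContinuousAt_of_continuousAt f (fun a _ => hf.continuousAt)
    (Metric.dist_mem_uniformity hδ)
  obtain ⟨ε, hε, h⟩ := Metric.mem_uniformity_dist.1 this
  refine ⟨ε, hε, fun x hx y hxy => ?_⟩
  have := h (a := x) (b := y) (by rwa [dist_eq_norm]) hx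
  simpa [Real.dist_eq] using this

section
variable {n : ℕ} {W u : EE n → ℝ}

theorem u_locInt (hW : Continuous W) (hum : Measurable u)
    (hu2 : Integrable fun x => u x ^ 2 * Real.exp (-W x)) : LocallyIntegrable u := by
  have h1 : LocallyIntegrable fun x => (1 + u x ^ 2 * Real.exp (-W x)) * (1 + Real.exp (W x)) := by
    have h2 : LocallyIntegrable fun x => (1 + u x ^ 2 * Real.exp (-W x)) :=
      (locallyIntegrable_const 1).add hu2.locallyIntegrable
    exact h2.mul_continuous (by fun_prop)
  refine h1.mono hum.aestronglyMeasurable (Filter.Eventually.of_forall fun x => ?_)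
  have e : u x ^ 2 * Real.exp (-W x) * Real.exp (W x) = u x ^ 2 := by
    rw [mul_assoc, ← Real.exp_add]; simp
  have p1 := Real.exp_pos (W x)
  have p2 : 0 ≤ u x ^ 2 * Real.exp (-W x) := by positivity
  rw [Real.norm_eq_abs, Real.norm_eq_abs, abs_of_nonneg
    (a := (1 + u x ^ 2 * Real.exp (-W x)) * (1 + Real.exp (W x))) (by positivity)]
  have : |u x| ≤ 1 + u x ^ 2 := by
    rw [abs_le]; constructor <;> nlinarith [sq_nonneg (u x - 1), sq_nonneg (u x + 1)]
  nlinarith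

theorem div_zero_id (hW : ContDiff ℝ 2 W) {η : EE n → ℝ} {ε : ℝ} (h : Moll η ε)
    (hul : LocallyIntegrable u)
    (horth : ∀ φ : EE n → ℝ, ContDiff ℝ (⊤ : ℕ∞) φ → HasCompactSupport φ →
      ∫ x, u x * gen W φ x * Real.exp (-W x) = 0)
    (ζ : EE n → ℝ) (hζ : ContDiff ℝ 1 ζ) (hζc : HasCompactSupport ζ) :
    ∫ x, ∑ i, (pd i (mol η fun y => u y * Real.exp (-W y)) x +
      mol η (fun y => u y * Real.exp (-W y) * pd i W y) x) * pd i ζ x = 0 := by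
  have hWc : Continuous W := hW.continuous
  have hW1 : ContDiff ℝ 1 W := hW.of_le (by norm_num)
  set w : EE n → ℝ := fun y => u y * Real.exp (-W y) with hw
  have hwl : LocallyIntegrable w := hul.mul_continuous (by fun_prop)
  have hwi : ∀ i, LocallyIntegrable fun y => w y * pd i W y :=
    fun i => hwl.mul_continuous (pd_continuous i hW1)
  have hη1 : ContDiff ℝ 1 η := h.smooth.of_le (by exact_mod_cast le_top)
  have hηi := fun i => pd_smooth i h.smooth
  have hηi1 : ∀ i, ContDiff ℝ 1 (pd i η) := fun i => (hηi i).of_le (by exact_mod_cast le_top)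
  have hηii := fun i => pd_smooth i (hηi i)
  have hG : ∀ i, ContDiff ℝ (⊤ : ℕ∞) fun x => pd i (mol η w) x + mol η (fun y => w y * pd i W y) x :=
    fun i => (pd_smooth i (mol_contDiff h.smooth h.cpt hwl)).add (mol_contDiff h.smooth h.cpt (hwi i))
  have hG1 : ∀ i, ContDiff ℝ 1 fun x => pd i (mol η w) x + mol η (fun y => w y * pd i W y) x :=
    fun i => (hG i).of_le (by exact_mod_cast le_top)
  have hdiv : ∀ x, ∑ i, pd i (fun x => pd i (mol η w) x + mol η (fun y => w y * pd i W y) x) x = 0 := by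
    intro x
    have e : ∀ i, pd i (fun x => pd i (mol η w) x + mol η (fun y => w y * pd i W y) x) x =
        mol (pd i (pd i η)) w x + mol (pd i η) (fun y => w y * pd i W y) x := by
      intro i
      rw [pd_add i ((pd_smooth i (mol_contDiff h.smooth h.cpt hwl)).of_le (by exact_mod_cast le_top))
        ((mol_contDiff h.smooth h.cpt (hwi i)).of_le (by exact_mod_cast le_top)),
        pd_mol i h.smooth h.cpt (hwi i), pd_mol i h.smooth h.cpt hwl,
        pd_mol i (hηi i) (pd_compact i h.cpt) hwl]
    simp only [e]
    have ho := horth (fun y => η (x - y)) (shift_smooth h.smooth x) (shift_cpt h.cpt x)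
    rw [← ho]
    have e2 : ∀ y, u y * gen W (fun y => η (x - y)) y * Real.exp (-W y) =
        ∑ i, (w y * pd i (pd i η) (x - y) + (w y * pd i W y) * pd i η (x - y)) := by
      intro y
      simp only [gen, Finset.mul_sum, Finset.sum_mul]
      refine Finset.sum_congr rfl fun i _ => ?_
      rw [pd_shift i hη1]
      have e3 : pd i (fun y => -pd i η (x - y)) y = pd i (pd i η) (x - y) := by
        rw [pd_neg, pd_shift i (hηi1 i)]; simp
      rw [e3, hw]; ring
    simp only [e2]
    have j1 : ∀ i, Integrable fun y => w y * pd i (pd i η) (x - y) := fun i =>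
      mol_integrand (hηii i).continuous (pd_compact i (pd_compact i h.cpt)) hwl x
    have j2 : ∀ i, Integrable fun y => w y * pd i W y * pd i η (x - y) := fun i =>
      mol_integrand (hηi i).continuous (pd_compact i h.cpt) (hwi i) x
    have j3 : ∀ i, Integrable fun y =>
        w y * pd i (pd i η) (x - y) + w y * pd i W y * pd i η (x - y) :=
      fun i => (j1 i).add (j2 i)
    rw [integral_finsetSum _ fun i _ => j3 i]
    refine Finset.sum_congr rfl fun i _ => ?_
    rw [integral_add (j1 i) (j2 i)]; rfl
  rw [integral_finsetSum]
  · have : ∀ i, ∫ x, (pd i (mol η w) x + mol η (fun y => w y * pd i W y) x) * pd i ζ x =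
        - ∫ x, pd i (fun x => pd i (mol η w) x + mol η (fun y => w y * pd i W y) x) x * ζ x :=
      fun i => ibp i (hG1 i) hζ hζc
    rw [Finset.sum_congr rfl fun i _ => this i, Finset.sum_neg_distrib]
    rw [← integral_finsetSum]
    · simp only [← Finset.sum_mul, hdiv]; simp
    · exact fun i _ => cc_integrable ((pd_continuous i (hG1 i)).mul hζ.continuous) hζc.mul_left
  · exact fun i _ => cc_integrable ((hG1 i).continuous.mul (pd_continuous i hζ))
      (pd_compact i hζc).mul_left

theorem energy_bound (hW : ContDiff ℝ 2 W) (hum : Measurable u)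
    (hu2 : Integrable fun x => u x ^ 2 * Real.exp (-W x))
    (horth : ∀ φ : EE n → ℝ, ContDiff ℝ (⊤ : ℕ∞) φ → HasCompactSupport φ →
      ∫ x, u x * gen W φ x * Real.exp (-W x) = 0)
    {χ : EE n → ℝ} (hχ : ContDiff ℝ (⊤ : ℕ∞) χ) (hχc : HasCompactSupport χ)
    (hχ0 : ∀ x, 0 ≤ χ x) (hχ1 : ∀ x, χ x ≤ 1) {δ : ℝ} (hδ : 0 < δ)
    (hχg : ∀ x, ∑ i, pd i χ x ^ 2 ≤ δ ^ 2) :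
    ∃ ε₀ > 0, ∀ η ε, ε ≤ ε₀ → Moll η ε →
      ∫ x, ∑ i, χ x ^ 2 * pd i (fun y => mol η (fun y => u y * Real.exp (-W y)) y * Real.exp (W y)) x ^ 2
        * Real.exp (-W x) ≤ (20 + 8 * n) * δ ^ 2 * ∫ x, u x ^ 2 * Real.exp (-W x) := by
  have hWc : Continuous W := hW.continuous
  have hW1 : ContDiff ℝ 1 W := hW.of_le (by norm_num)
  have hχ' : ContDiff ℝ 1 χ := hχ.of_le (by exact_mod_cast le_top)
  have hul := u_locInt hWc hum hu2
  obtain ⟨ε₁, hε₁, hu1⟩ := uc_compact hχc.isCompact hWc (Real.log_pos one_lt_two)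
  have hex : ∃ ε₂ > 0, ∀ i, ∀ x ∈ tsupport χ, ∀ y, ‖x - y‖ < ε₂ → |pd i W x - pd i W y| < δ := by
    choose e he1 he2 using fun i : Fin n => uc_compact hχc.isCompact (pd_continuous i hW1) hδ
    by_cases hn : Nonempty (Fin n)
    · refine ⟨Finset.univ.inf' Finset.univ_nonempty e, ?_, fun i x hx y hxy => he2 i x hx y ?_⟩
      · rw [gt_iff_lt, Finset.lt_inf'_iff]; exact fun i _ => he1 i
      · exact lt_of_lt_of_le hxy (Finset.inf'_le _ (Finset.mem_univ i))
    · exact ⟨1, one_pos, fun i => (hn ⟨i⟩).elim⟩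
  obtain ⟨ε₂, hε₂, hu2'⟩ := hex
  refine ⟨min ε₁ ε₂, by positivity, fun η ε hε h => ?_⟩
  have hηc : Continuous η := h.smooth.continuous
  set w : EE n → ℝ := fun y => u y * Real.exp (-W y) with hw
  have hwm : Measurable w := hum.mul (by fun_prop)
  have hwl : LocallyIntegrable w := hul.mul_continuous (by fun_prop)
  have hwi : ∀ i, LocallyIntegrable fun y => w y * pd i W y :=
    fun i => hwl.mul_continuous (pd_continuous i hW1)
  have hwa : LocallyIntegrable (fun x => |w x|) :=
    hwl.mono hwl.aestronglyMeasurable.norm (Filter.Eventually.of_forall fun x => by simp)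
  have hmc : ContDiff ℝ 1 (mol η w) :=
    (mol_contDiff h.smooth h.cpt hwl).of_le (by exact_mod_cast le_top)
  have hHw : (fun y => Real.exp (W y) * w y ^ 2) = fun y => u y ^ 2 * Real.exp (-W y) := by
    ext y
    have : Real.exp (W y) * Real.exp (-W y) = 1 := by rw [← Real.exp_add]; simp
    calc _ = u y ^ 2 * Real.exp (-W y) * (Real.exp (W y) * Real.exp (-W y)) := by rw [hw]; ring
      _ = _ := by rw [this, mul_one]
  set v : EE n → ℝ := fun y => mol η w y * Real.exp (W y) with hv
  have hv1 : ContDiff ℝ 1 v := hmc.mul hW1.exp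
  set R : Fin n → EE n → ℝ := fun i x => mol η w x * pd i W x - mol η (fun y => w y * pd i W y) x with hR
  have hRc : ∀ i, Continuous (R i) := fun i =>
    (hmc.continuous.mul (pd_continuous i hW1)).sub (mol_contDiff h.smooth h.cpt (hwi i)).continuous
  have hen := energy (G := fun i x => pd i (mol η w) x + mol η (fun y => w y * pd i W y) x)
    (R := R) hWc hv1 hχ' hχc hRc (by
      intro i x
      rw [hv, pd_mul i hmc hW1.exp, pd_exp i hW1, hR]
      have : Real.exp (-W x) * Real.exp (W x) = 1 := by rw [← Real.exp_add]; simp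
      linear_combination (-pd i (mol η w) x - mol η w x * pd i W x) * this)
    (fun ζ hζ hζc => div_zero_id hW h hul horth ζ hζ hζc)
  set s : EE n → ℝ := fun x => ∫ y, |w y| * η (x - y) with hs
  have hs0 : ∀ x, 0 ≤ s x := fun x => integral_nonneg fun y => mul_nonneg (abs_nonneg _) (h.nonneg _)
  have hms : ∀ x, |mol η w x| ≤ s x := by
    intro x
    rw [← Real.norm_eq_abs, mol, hs]
    refine (norm_integral_le_integral_norm _).trans (le_of_eq ?_)
    simp only [norm_mul, Real.norm_eq_abs, abs_of_nonneg (h.nonneg _)]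
  have hRs : ∀ i, ∀ x ∈ tsupport χ, |R i x| ≤ δ * s x := by
    intro i x hx
    have e : R i x = ∫ y, (w y * (pd i W x - pd i W y)) * η (x - y) := by
      simp only [hR, mol]
      rw [← integral_mul_const, ← integral_sub ((mol_integrand hηc h.cpt hwl x).mul_const _)
        (mol_integrand hηc h.cpt (hwi i) x)]
      exact integral_congr_ae (Filter.Eventually.of_forall fun y => by simp only; ring)
    rw [e, ← Real.norm_eq_abs, hs]
    simp only [← integral_const_mul]
    refine norm_integral_le_of_norm_le ((mol_integrand hηc h.cpt hwa x).const_mul _)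
      (Filter.Eventually.of_forall fun y => ?_)
    rw [norm_mul, norm_mul, Real.norm_of_nonneg (h.nonneg _), Real.norm_eq_abs, Real.norm_eq_abs]
    by_cases hxy : η (x - y) = 0
    · simp [hxy]
    · have h1 := hu2' i x hx y (lt_of_lt_of_le (h.supp _ hxy) (hε.trans (min_le_right _ _)))
      have : |w y| * |pd i W x - pd i W y| ≤ |w y| * δ :=
        mul_le_mul_of_nonneg_left h1.le (abs_nonneg _)
      nlinarith [h.nonneg (x - y)]
  have hWW : ∀ x ∈ tsupport χ, ∀ y, η (x - y) ≠ 0 → Real.exp (W x) ≤ 2 * Real.exp (W y) := by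
    intro x hx y hxy
    have h1 := hu1 x hx y (lt_of_lt_of_le (h.supp _ hxy) (hε.trans (min_le_left _ _)))
    have h2 : W x ≤ Real.log 2 + W y := by linarith [(abs_lt.1 h1).2]
    calc _ ≤ Real.exp (Real.log 2 + W y) := Real.exp_le_exp.2 h2
      _ = _ := by rw [Real.exp_add, Real.exp_log two_pos]
  have hχz : ∀ x, x ∉ tsupport χ → χ x = 0 := fun x hx => image_eq_zero_of_notMem_tsupport hx
  have hpz : ∀ i x, x ∉ tsupport χ → pd i χ x = 0 := fun i x hx => by
    have : fderiv ℝ χ x = 0 := by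
      by_contra h
      exact hx (tsupport_fderiv_subset ℝ (subset_tsupport _ (a := x) h))
    unfold pd; rw [this]; rfl
  have hχ2c : HasCompactSupport fun x => χ x ^ 2 := by
    simp only [sq]; exact hχc.mul_right
  have b1 : ∫ x, ∑ i, v x ^ 2 * pd i χ x ^ 2 * Real.exp (-W x) ≤
      (2 * δ ^ 2) * ∫ y, Real.exp (W y) * w y ^ 2 := by
    refine jensen (k := fun x => Real.exp (W x) * ∑ i, pd i χ x ^ 2) h hwm hwl (by fun_prop)
      (fun y => (Real.exp_pos _).le) (by rw [hHw]; exact hu2) (by positivity) ?_ ?_ ?_ ?_ ?_ ?_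
    · have : Continuous fun x => Real.exp (W x) * ∑ i, pd i χ x ^ 2 :=
        hWc.rexp.mul (continuous_finsetSum _ fun i _ => (pd_continuous i hχ').pow 2)
      exact this.measurable
    · intro x; exact mul_nonneg (Real.exp_pos _).le (Finset.sum_nonneg fun i _ => sq_nonneg _)
    · intro x y hxy
      by_cases hx : x ∈ tsupport χ
      · calc _ ≤ (2 * Real.exp (W y)) * δ ^ 2 :=
            mul_le_mul (hWW x hx y hxy) (hχg x) (Finset.sum_nonneg fun i _ => sq_nonneg _) (by positivity)
          _ = _ := by ring
      · simp only [hpz _ x hx]; simp; positivity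
    · exact integrable_finsetSum _ fun i _ => cc_integrable (((hv1.continuous.pow 2).mul
        ((pd_continuous i hχ').pow 2)).mul hWc.neg.rexp) (by
          have : HasCompactSupport fun x => pd i χ x ^ 2 := by
            simp only [sq]; exact (pd_compact i hχc).mul_right
          exact this.mul_left.mul_right)
    · intro x; exact Finset.sum_nonneg fun i _ => by positivity
    · intro x
      have e : Real.exp (W x) * Real.exp (-W x) = 1 := by rw [← Real.exp_add]; simp
      have e1 : ∑ i, v x ^ 2 * pd i χ x ^ 2 * Real.exp (-W x) =
          Real.exp (W x) * (∑ i, pd i χ x ^ 2) * mol η w x ^ 2 := by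
        rw [Finset.mul_sum, Finset.sum_mul]
        refine Finset.sum_congr rfl fun i _ => ?_
        rw [hv]
        linear_combination (mol η w x ^ 2 * pd i χ x ^ 2 * Real.exp (W x)) * e
      rw [e1]
      refine mul_le_mul_of_nonneg_left ?_
        (mul_nonneg (Real.exp_pos _).le (Finset.sum_nonneg fun i _ => sq_nonneg _))
      rw [← sq_abs]
      exact pow_le_pow_left₀ (abs_nonneg _) (hms x) 2
  have b2 : ∫ x, ∑ i, χ x ^ 2 * R i x ^ 2 * Real.exp (W x) ≤
      (2 * n * δ ^ 2) * ∫ y, Real.exp (W y) * w y ^ 2 := by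
    refine jensen (k := fun x => χ x ^ 2 * Real.exp (W x) * (n * δ ^ 2)) h hwm hwl (by fun_prop)
      (fun y => (Real.exp_pos _).le) (by rw [hHw]; exact hu2) (by positivity) ?_ ?_ ?_ ?_ ?_ ?_
    · have : Continuous fun x => χ x ^ 2 * Real.exp (W x) * (n * δ ^ 2) :=
        ((hχ.continuous.pow 2).mul hWc.rexp).mul continuous_const
      exact this.measurable
    · intro x; positivity
    · intro x y hxy
      by_cases hx : x ∈ tsupport χ
      · have h1 : χ x ^ 2 ≤ 1 := pow_le_one₀ (hχ0 x) (hχ1 x)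
        calc χ x ^ 2 * Real.exp (W x) * (n * δ ^ 2) ≤ 1 * (2 * Real.exp (W y)) * (n * δ ^ 2) := by
              refine mul_le_mul_of_nonneg_right ?_ (by positivity)
              exact mul_le_mul h1 (hWW x hx y hxy) (by positivity) (by positivity)
          _ = _ := by ring
      · simp only [hχz x hx]; simp; positivity
    · exact integrable_finsetSum _ fun i _ => cc_integrable (((hχ.continuous.pow 2).mul
        ((hRc i).pow 2)).mul hWc.rexp) hχ2c.mul_right.mul_right
    · intro x; exact Finset.sum_nonneg fun i _ => by positivity
    · intro x
      by_cases hx : x ∈ tsupport χ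
      · have : ∀ i ∈ Finset.univ, χ x ^ 2 * R i x ^ 2 * Real.exp (W x) ≤
            χ x ^ 2 * (δ * s x) ^ 2 * Real.exp (W x) := by
          intro i _
          refine mul_le_mul_of_nonneg_right (mul_le_mul_of_nonneg_left ?_ (sq_nonneg _)) (Real.exp_pos _).le
          rw [← sq_abs]
          exact pow_le_pow_left₀ (abs_nonneg _) (hRs i x hx) 2
        refine (Finset.sum_le_sum this).trans (le_of_eq ?_)
        simp only [Finset.sum_const, Finset.card_univ, Fintype.card_fin, nsmul_eq_mul, hs]
        ring
      · simp [hχz x hx]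
  rw [hHw] at b1 b2
  refine hen.trans ?_
  calc _ ≤ 10 * ((2 * δ ^ 2) * ∫ y, u y ^ 2 * Real.exp (-W y)) +
        4 * ((2 * n * δ ^ 2) * ∫ y, u y ^ 2 * Real.exp (-W y)) := by gcongr
    _ = _ := by ring

theorem liouville (hW : ContDiff ℝ 2 W) (hum : Measurable u)
    (hu2 : Integrable fun x => u x ^ 2 * Real.exp (-W x))
    (horth : ∀ φ : EE n → ℝ, ContDiff ℝ (⊤ : ℕ∞) φ → HasCompactSupport φ →
      ∫ x, u x * gen W φ x * Real.exp (-W x) = 0) : ∃ c : ℝ, ∀ᵐ x, u x = c := by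
  have hWc : Continuous W := hW.continuous
  have hW1 : ContDiff ℝ 1 W := hW.of_le (by norm_num)
  have hul := u_locInt hWc hum hu2
  refine weak_const hul fun i θ hθ hθc => ?_
  have hθ1 : ContDiff ℝ 1 θ := hθ.of_le (by exact_mod_cast le_top)
  set U := ∫ x, u x ^ 2 * Real.exp (-W x) with hU
  have hU0 : 0 ≤ U := integral_nonneg fun x => by positivity
  set D := ∫ x, θ x ^ 2 * Real.exp (W x) with hD
  have hD0 : 0 ≤ D := integral_nonneg fun x => by positivity
  set w : EE n → ℝ := fun y => u y * Real.exp (-W y) with hw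
  have hwl : LocallyIntegrable w := hul.mul_continuous (by fun_prop)
  have main : ∀ δ > 0, |∫ x, u x * pd i θ x| ≤ δ * (1 + (20 + 8 * n) * U + D) := by
    intro δ hδ
    obtain ⟨χ, hχ, hχc, hχ0, hχ1, hχK, hχg⟩ := cutoff hθc.isCompact hδ
    obtain ⟨ε₁, hε₁, he1⟩ := energy_bound hW hum hu2 horth hχ hχc hχ0 hχ1 hδ hχg
    have hkc : Continuous fun x => Real.exp (W x) * pd i θ x := hWc.rexp.mul (pd_continuous i hθ1)
    obtain ⟨ε₂, hε₂, he2⟩ := mol_weak hwl hkc (pd_compact i hθc).mul_left hδ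
    obtain ⟨η, h⟩ := moll_exists (n := n) (ε := min ε₁ ε₂) (by positivity)
    have E := he1 η _ (min_le_left _ _) h
    have F := he2 η _ (min_le_right _ _) h
    have hmc : ContDiff ℝ 1 (mol η w) :=
      (mol_contDiff h.smooth h.cpt hwl).of_le (by exact_mod_cast le_top)
    set v : EE n → ℝ := fun y => mol η w y * Real.exp (W y) with hv
    have hv1 : ContDiff ℝ 1 v := hmc.mul hW1.exp
    have f1 : ∫ y, w y * (Real.exp (W y) * pd i θ y) = ∫ x, u x * pd i θ x := by
      refine integral_congr_ae (Filter.Eventually.of_forall fun x => ?_)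
      have e : Real.exp (W x) * Real.exp (-W x) = 1 := by rw [← Real.exp_add]; simp
      simp only [hw]; linear_combination (u x * pd i θ x) * e
    have f2 : ∫ x, mol η w x * (Real.exp (W x) * pd i θ x) = - ∫ x, pd i v x * θ x := by
      rw [← ibp i hv1 hθ1 hθc]
      refine integral_congr_ae (Filter.Eventually.of_forall fun x => ?_)
      simp only [hv]; ring
    rw [f1, f2] at F
    have hχ2c : HasCompactSupport fun x => χ x ^ 2 := by
      simp only [sq]; exact hχc.mul_right
    have hθ2c : HasCompactSupport fun x => θ x ^ 2 := by
      simp only [sq]; exact hθc.mul_right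
    have iE : Integrable fun x => ∑ i, χ x ^ 2 * pd i v x ^ 2 * Real.exp (-W x) :=
      integrable_finsetSum _ fun i _ => cc_integrable (((hχ.continuous.pow 2).mul
        ((pd_continuous i hv1).pow 2)).mul hWc.neg.rexp) hχ2c.mul_right.mul_right
    have iD : Integrable fun x => θ x ^ 2 * Real.exp (W x) :=
      cc_integrable ((hθ.continuous.pow 2).mul hWc.rexp) hθ2c.mul_right
    have G : |∫ x, pd i v x * θ x| ≤ δ⁻¹ * ((20 + 8 * n) * δ ^ 2 * U) + δ * D := by
      calc |∫ x, pd i v x * θ x| ≤ ∫ x, (δ⁻¹ * (∑ i, χ x ^ 2 * pd i v x ^ 2 * Real.exp (-W x)) +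
            δ * (θ x ^ 2 * Real.exp (W x))) := by
            rw [← Real.norm_eq_abs]
            refine norm_integral_le_of_norm_le ((iE.const_mul _).add (iD.const_mul _))
              (Filter.Eventually.of_forall fun x => ?_)
            by_cases hx : x ∈ tsupport θ
            · have h1 : pd i v x ^ 2 * Real.exp (-W x) ≤
                  ∑ i, χ x ^ 2 * pd i v x ^ 2 * Real.exp (-W x) := by
                have := Finset.single_le_sum (f := fun i => χ x ^ 2 * pd i v x ^ 2 * Real.exp (-W x))
                  (fun j _ => by positivity) (Finset.mem_univ i)
                simpa [hχK x hx] using this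
              have h2 : δ⁻¹ * (pd i v x ^ 2 * Real.exp (-W x)) ≤ δ⁻¹ *
                  ∑ i, χ x ^ 2 * pd i v x ^ 2 * Real.exp (-W x) :=
                mul_le_mul_of_nonneg_left h1 (by positivity)
              refine le_trans ?_ (add_le_add_left h2 _)
              rw [Real.norm_eq_abs, abs_mul, Real.exp_neg, ← sq_abs (pd i v x), ← sq_abs (θ x)]
              have he : 0 < Real.exp (W x) := Real.exp_pos _
              generalize Real.exp (W x) = e at he
              have ha := abs_nonneg (pd i v x)
              have hb := abs_nonneg (θ x)
              generalize |pd i v x| = a at ha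
              generalize |θ x| = b at hb
              have : δ⁻¹ * (a ^ 2 * e⁻¹) + δ * (b ^ 2 * e) - a * b =
                  (δ⁻¹ * e⁻¹) * ((a - δ * e * b) ^ 2 + a * (δ * e * b)) := by
                field_simp; ring
              have h3 : 0 ≤ (δ⁻¹ * e⁻¹) * ((a - δ * e * b) ^ 2 + a * (δ * e * b)) := by positivity
              linarith
            · rw [image_eq_zero_of_notMem_tsupport hx]
              simp only [mul_zero, norm_zero]
              have : 0 ≤ ∑ i, χ x ^ 2 * pd i v x ^ 2 * Real.exp (-W x) :=
                Finset.sum_nonneg fun j _ => by positivity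
              positivity
        _ = δ⁻¹ * (∫ x, ∑ i, χ x ^ 2 * pd i v x ^ 2 * Real.exp (-W x)) + δ * D := by
            rw [integral_add (iE.const_mul _) (iD.const_mul _), integral_const_mul, integral_const_mul]
        _ ≤ _ := by
            have := mul_le_mul_of_nonneg_left E (a := δ⁻¹) (by positivity)
            linarith
    have e4 : δ⁻¹ * ((20 + 8 * n) * δ ^ 2 * U) = δ * ((20 + 8 * n) * U) := by
      field_simp
    rw [e4] at G
    rw [abs_le] at F G ⊢
    constructor <;> nlinarith
  by_contra hne
  have hpos : 0 < |∫ x, u x * pd i θ x| := abs_pos.2 hne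
  set Q := |∫ x, u x * pd i θ x|
  set C := 1 + (20 + 8 * n) * U + D with hC
  have hC1 : 0 < C := by positivity
  have := main (Q / (2 * C)) (by positivity)
  have e5 : Q / (2 * C) * C = Q / 2 := by field_simp
  rw [e5] at this
  linarith
end

open MeasureTheory Real Set
open scoped ENNReal RealInnerProductSpace

theorem coupling_est {n : ℕ} {μ ν : Measure (EE n)} {c : EE n → EE n → ℝ≥0∞}
    (hcm : Measurable fun p : EE n × EE n => c p.1 p.2) {ρ : EE n → ℝ}
    (hρμ : Integrable ρ μ) (hρν : Integrable ρ ν) {L : ℝ≥0∞}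
    (hL : L = costLipNorm c ρ) (hLfin : L ≠ ⊤) (hT : transportCost c ν μ ≠ ⊤) :
    ENNReal.ofReal |∫ x, ρ x ∂μ - ∫ x, ρ x ∂ν| ≤ L * transportCost c ν μ := by
  have key : ∀ cpl ∈ {cpl : MeasureTheory.Measure (EE n × EE n) |
      cpl.map Prod.fst = ν ∧ cpl.map Prod.snd = μ ∧ MeasureTheory.IsProbabilityMeasure cpl},
      ∫⁻ p, c p.1 p.2 ∂cpl ≠ ⊤ →
      ENNReal.ofReal |∫ x, ρ x ∂μ - ∫ x, ρ x ∂ν| ≤ L * ∫⁻ p, c p.1 p.2 ∂cpl := by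
    rintro τ ⟨h1, h2, h3⟩ hfin
    have hlt := ae_lt_top hcm hfin
    have i1 : Integrable (fun p : EE n × EE n => ρ p.1) τ := by
      rw [← h1] at hρν; exact hρν.comp_measurable measurable_fst
    have i2 : Integrable (fun p : EE n × EE n => ρ p.2) τ := by
      rw [← h2] at hρμ; exact hρμ.comp_measurable measurable_snd
    have e1 : ∫ x, ρ x ∂ν = ∫ p, ρ p.1 ∂τ := by
      rw [← h1] at hρν ⊢
      exact integral_map measurable_fst.aemeasurable hρν.aestronglyMeasurable
    have e2 : ∫ x, ρ x ∂μ = ∫ p, ρ p.2 ∂τ := by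
      rw [← h2] at hρμ ⊢
      exact integral_map measurable_snd.aemeasurable hρμ.aestronglyMeasurable
    rw [e1, e2, ← integral_sub i2 i1]
    calc ENNReal.ofReal |∫ p, (ρ p.2 - ρ p.1) ∂τ|
        ≤ ENNReal.ofReal (∫ p, |ρ p.2 - ρ p.1| ∂τ) :=
          ENNReal.ofReal_le_ofReal (abs_integral_le_integral_abs)
      _ = ∫⁻ p, ENNReal.ofReal |ρ p.2 - ρ p.1| ∂τ :=
          ofReal_integral_eq_lintegral_ofReal (i2.sub i1).abs
            (Filter.Eventually.of_forall fun p => abs_nonneg _)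
      _ ≤ ∫⁻ p, L * c p.1 p.2 ∂τ := by
          refine lintegral_mono_ae ?_
          filter_upwards [hlt] with p hp
          have h : ENNReal.ofReal |ρ p.1 - ρ p.2| / c p.1 p.2 ≤ L := by
            rw [hL]; exact le_iSup₂_of_le p.1 p.2 le_rfl
          rw [abs_sub_comm]
          refine (ENNReal.div_le_iff_le_mul (Or.inr hLfin) (Or.inl hp.ne)).1 h
      _ = L * ∫⁻ p, c p.1 p.2 ∂τ := lintegral_const_mul _ hcm
  by_cases hL0 : L = 0
  · have : transportCost c ν μ < ⊤ := lt_top_iff_ne_top.2 hT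
    unfold transportCost at this
    obtain ⟨τ, hτ⟩ := iInf_lt_iff.1 this
    obtain ⟨hτ1, hτ2⟩ := iInf_lt_iff.1 hτ
    have := key τ hτ1 hτ2.ne
    simpa [hL0] using this
  · rw [mul_comm, ← ENNReal.div_le_iff hL0 hLfin]
    unfold transportCost
    refine le_iInf₂ fun τ hτ => ?_
    by_cases h : ∫⁻ p, c p.1 p.2 ∂τ = ⊤
    · rw [h]; exact le_top
    · exact ENNReal.div_le_of_le_mul' (key τ hτ h)

theorem grad_sqrt {n : ℕ} {f : EE n → ℝ} (hf : ContDiff ℝ 1 f) (x : EE n) (hp : 0 < f x) :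
    ‖gradient (fun y => Real.sqrt (f y)) x‖ ^ 2 = (∑ i, pd i f x ^ 2) / (4 * f x) := by
  rw [norm_gradient_sq, Finset.sum_div]
  refine Finset.sum_congr rfl fun i _ => ?_
  have : pd i (fun y => Real.sqrt (f y)) x = 1 / (2 * √(f x)) * pd i f x := by
    unfold pd
    rw [fderiv_sqrt (hf.differentiable one_ne_zero x) hp.ne']
    simp
  rw [this, mul_pow, div_pow, mul_pow, Real.sq_sqrt hp.le]
  ring

structure Setup {n : ℕ} (μ : Measure (EE n)) (ρ : EE n → ℝ) (m : ℝ)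
    (c : EE n → EE n → ℝ≥0∞) (L A : ℝ≥0∞) (α : ℝ≥0∞ → ℝ≥0∞) : Prop where
  prob : IsProbabilityMeasure μ
  rint : Integrable ρ μ
  hm : m = ∫ x, ρ x ∂μ
  hcm : Measurable fun p : EE n × EE n => c p.1 p.2
  hL : L = costLipNorm c ρ
  hLfin : L ≠ ⊤
  hmono : StrictMono α
  hWI : ∀ f : EE n → ℝ, (∀ x, 0 < f x) → ContDiff ℝ 1 f →
      IsProbabilityMeasure (μ.withDensity fun x => ENNReal.ofReal (f x)) →
      α (transportCost c (μ.withDensity fun x => ENNReal.ofReal (f x)) μ) ≤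
        ∫⁻ x, ENNReal.ofReal (‖gradient (fun y => Real.sqrt (f y)) x‖ ^ 2) ∂μ
  hA : A = ⨆ r : ℝ≥0∞, r * (2 * L) - α r
  hAfin : A ≠ ⊤

section
variable {n : ℕ} {μ : Measure (EE n)} {ρ : EE n → ℝ} {m : ℝ}
    {c : EE n → EE n → ℝ≥0∞} {L A : ℝ≥0∞} {α : ℝ≥0∞ → ℝ≥0∞}

theorem Setup.prob_f (S : Setup μ ρ m c L A α) {f : EE n → ℝ} (hf : ∀ x, 0 < f x)
    (hfi : Integrable f μ) (hf1 : ∫ x, f x ∂μ = 1) :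
    IsProbabilityMeasure (μ.withDensity fun x => ENNReal.ofReal (f x)) := by
  constructor
  rw [withDensity_apply _ MeasurableSet.univ, Measure.restrict_univ,
    ← ofReal_integral_eq_lintegral_ofReal hfi (Filter.Eventually.of_forall fun x => (hf x).le), hf1]
  simp

theorem Setup.int_f {f : EE n → ℝ} (hf : ∀ x, 0 < f x)
    (hfc : ContDiff ℝ 1 f) :
    ∫ x, ρ x ∂(μ.withDensity fun x => ENNReal.ofReal (f x)) = ∫ x, f x * ρ x ∂μ := by
  rw [integral_withDensity_eq_integral_toReal_smul hfc.continuous.measurable.ennreal_ofReal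
    (Filter.Eventually.of_forall fun x => ENNReal.ofReal_lt_top)]
  simp [ENNReal.toReal_ofReal (hf _).le]

theorem Setup.est (S : Setup μ ρ m c L A α) {f : EE n → ℝ} (hf : ∀ x, 0 < f x)
    (hfc : ContDiff ℝ 1 f) (hfi : Integrable f μ) (hf1 : ∫ x, f x ∂μ = 1)
    (hfρ : Integrable (fun x => f x * ρ x) μ)
    (hT : transportCost c (μ.withDensity fun x => ENNReal.ofReal (f x)) μ ≠ ⊤) :
    ENNReal.ofReal |m - ∫ x, f x * ρ x ∂μ| ≤
      L * transportCost c (μ.withDensity fun x => ENNReal.ofReal (f x)) μ := by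
  rw [S.hm, ← Setup.int_f (μ := μ) hf hfc]
  refine coupling_est S.hcm S.rint ?_ S.hL S.hLfin hT
  rw [integrable_withDensity_iff_integrable_smul' hfc.continuous.measurable.ennreal_ofReal
    (Filter.Eventually.of_forall fun x => ENNReal.ofReal_lt_top)]
  simpa [ENNReal.toReal_ofReal (hf _).le] using hfρ

theorem Setup.est2 (S : Setup μ ρ m c L A α) {f : EE n → ℝ} (hf : ∀ x, 0 < f x)
    (hfc : ContDiff ℝ 1 f) (hfi : Integrable f μ) (hf1 : ∫ x, f x ∂μ = 1)
    (hfρ : Integrable (fun x => f x * ρ x) μ) {J : ℝ} (hJ0 : 0 ≤ J)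
    (hJ : ∫⁻ x, ENNReal.ofReal (‖gradient (fun y => Real.sqrt (f y)) x‖ ^ 2) ∂μ ≤ ENNReal.ofReal J)
    (hT : transportCost c (μ.withDensity fun x => ENNReal.ofReal (f x)) μ ≠ ⊤) :
    m - ∫ x, f x * ρ x ∂μ ≤ A.toReal / 2 + J / 2 := by
  have h1 := S.est hf hfc hfi hf1 hfρ hT
  have h2 := (S.hWI f hf hfc (S.prob_f hf hfi hf1)).trans hJ
  generalize transportCost c (μ.withDensity fun x => ENNReal.ofReal (f x)) μ = T at *
  have h3 : T * (2 * L) ≤ A + α T := by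
    rw [← tsub_le_iff_right, S.hA]
    exact le_iSup (fun r : ℝ≥0∞ => r * (2 * L) - α r) T
  have h4 : 2 * ENNReal.ofReal |m - ∫ x, f x * ρ x ∂μ| ≤ A + ENNReal.ofReal J := by
    calc 2 * ENNReal.ofReal |m - ∫ x, f x * ρ x ∂μ| ≤ 2 * (L * T) := by gcongr
      _ = T * (2 * L) := by ring
      _ ≤ A + α T := h3
      _ ≤ _ := by gcongr
  have h5 := ENNReal.toReal_mono (by simp [S.hAfin]) h4
  rw [ENNReal.toReal_mul, ENNReal.toReal_add S.hAfin ENNReal.ofReal_ne_top,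
    ENNReal.toReal_ofReal (abs_nonneg _), ENNReal.toReal_ofReal hJ0] at h5
  have := le_abs_self (m - ∫ x, f x * ρ x ∂μ)
  simp at h5
  linarith

theorem bdd_int [IsFiniteMeasure μ] {h : EE n → ℝ} (hh : Continuous h)
    (hc : HasCompactSupport h) : Integrable h μ := by
  obtain ⟨C, hC⟩ := hh.bounded_above_of_compact_support hc
  exact Integrable.of_bound hh.aestronglyMeasurable C (Filter.Eventually.of_forall hC)

theorem Setup.const (S : Setup μ ρ m c L A α) (hL0 : L = 0) : ∀ᵐ x ∂μ, ρ x = m := by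
  have := S.prob
  have hαt : 0 < α ⊤ := lt_of_le_of_lt zero_le (S.hmono (a := 0) (b := ⊤) (by simp))
  obtain ⟨a, ha0, ha⟩ : ∃ a : ℝ, 0 < a ∧ ENNReal.ofReal a < α ⊤ := by
    obtain ⟨r, hr, hr2⟩ := ENNReal.lt_iff_exists_nnreal_btwn.1 hαt
    exact ⟨r, by simpa using hr, by simpa using hr2⟩
  have main : ∀ h : EE n → ℝ, ContDiff ℝ (⊤ : ℕ∞) h → HasCompactSupport h →
      ∫ x, h x • (ρ x - m) ∂μ = 0 := by
    intro h hh hhc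
    have hh1 : ContDiff ℝ 1 h := hh.of_le (by exact_mod_cast le_top)
    obtain ⟨B, hB⟩ := hh.continuous.bounded_above_of_compact_support hhc
    have hi : Integrable h μ := bdd_int hh.continuous hhc
    set b := ∫ x, h x ∂μ with hb
    set D := ∫ x, ∑ i, pd i h x ^ 2 ∂μ with hD
    have hD0 : 0 ≤ D := integral_nonneg fun x => by positivity
    have hDi : Integrable (fun x => ∑ i, pd i h x ^ 2) μ :=
      integrable_finsetSum _ fun i _ => bdd_int ((pd_continuous i hh1).pow 2) (by
        simp only [sq]; exact (pd_compact i hhc).mul_right)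
    have hB0 : 0 ≤ B := (norm_nonneg _).trans (hB 0)
    obtain ⟨ε, he0, he1, he2, he3⟩ : ∃ ε : ℝ, 0 < ε ∧ ε ≤ 1 ∧ ε * (B + |b|) ≤ 1 / 2 ∧ ε * D ≤ a := by
      refine ⟨min 1 (min ((1 / 2) / (B + |b| + 1)) (a / (D + 1))), by positivity, min_le_left _ _,
        ?_, ?_⟩
      · have : min 1 (min ((1 / 2) / (B + |b| + 1)) (a / (D + 1))) ≤ (1 / 2) / (B + |b| + 1) :=
          (min_le_right _ _).trans (min_le_left _ _)
        refine (mul_le_mul_of_nonneg_right this (by positivity)).trans ?_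
        rw [div_mul_eq_mul_div, div_le_iff₀ (by positivity)]; linarith
      · have : min 1 (min ((1 / 2) / (B + |b| + 1)) (a / (D + 1))) ≤ a / (D + 1) :=
          (min_le_right _ _).trans (min_le_right _ _)
        refine (mul_le_mul_of_nonneg_right this (by positivity)).trans ?_
        rw [div_mul_eq_mul_div, div_le_iff₀ (by positivity)]; nlinarith
    set f : EE n → ℝ := fun x => 1 + ε * (h x - b) with hf
    have hf2 : ∀ x, 1 / 2 ≤ f x := by
      intro x
      have h1 : |h x| ≤ B := hB x
      have h2 : -(B + |b|) ≤ h x - b := by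
        have := neg_abs_le (h x); have := le_abs_self b; linarith
      have h3 : ε * (-(B + |b|)) ≤ ε * (h x - b) := mul_le_mul_of_nonneg_left h2 he0.le
      simp only [hf]; linarith
    have hfp : ∀ x, 0 < f x := fun x => by linarith [hf2 x]
    have hfc : ContDiff ℝ 1 f := contDiff_const.add (contDiff_const.mul (hh1.sub contDiff_const))
    have hfi : Integrable f μ :=
      (integrable_const _).add ((hi.sub (integrable_const _)).const_mul _)
    have hf1 : ∫ x, f x ∂μ = 1 := by
      simp only [hf]
      have hib : Integrable (fun x => h x - b) μ := hi.sub (integrable_const b)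
      rw [integral_add (integrable_const _) (hib.const_mul _),
        integral_const_mul, integral_sub hi (integrable_const b)]
      simp [← hb]
    have hhρ : Integrable (fun x => h x * ρ x) μ :=
      S.rint.bdd_mul hh.continuous.aestronglyMeasurable (Filter.Eventually.of_forall hB)
    have hfe : ∀ x, f x * ρ x = (1 - ε * b) * ρ x + ε * (h x * ρ x) := fun x => by
      simp only [hf]; ring
    have hfρ : Integrable (fun x => f x * ρ x) μ := by
      simp only [hfe]
      exact (S.rint.const_mul _).add (hhρ.const_mul _)
    have hI : ∫⁻ x, ENNReal.ofReal (‖gradient (fun y => Real.sqrt (f y)) x‖ ^ 2) ∂μ ≤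
        ENNReal.ofReal a := by
      have e : ∀ i x, pd i f x = ε * pd i h x := by
        intro i x
        simp only [hf, pd]
        rw [fderiv_const_add, fderiv_const_mul ((hh1.differentiable one_ne_zero x).sub_const b),
          fderiv_sub_const]
        simp
      calc ∫⁻ x, ENNReal.ofReal (‖gradient (fun y => Real.sqrt (f y)) x‖ ^ 2) ∂μ
          ≤ ∫⁻ x, ENNReal.ofReal (ε * ∑ i, pd i h x ^ 2) ∂μ := by
            refine lintegral_mono fun x => ENNReal.ofReal_le_ofReal ?_
            rw [grad_sqrt hfc x (hfp x), div_le_iff₀ (by linarith [hfp x])]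
            simp only [e, mul_pow, ← Finset.mul_sum]
            have : 0 ≤ ∑ i, pd i h x ^ 2 := by positivity
            have h5 : ε ^ 2 ≤ ε := by nlinarith
            have h6 : ε ^ 2 * ∑ i, pd i h x ^ 2 ≤ ε * ∑ i, pd i h x ^ 2 := by gcongr
            have h7 : 0 ≤ ε * ∑ i, pd i h x ^ 2 := by positivity
            nlinarith [hf2 x]
        _ = ENNReal.ofReal (ε * D) := by
            rw [← ofReal_integral_eq_lintegral_ofReal (hDi.const_mul _)
              (Filter.Eventually.of_forall fun x => by positivity), integral_const_mul]
        _ ≤ _ := ENNReal.ofReal_le_ofReal he3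
    have hT : transportCost c (μ.withDensity fun x => ENNReal.ofReal (f x)) μ ≠ ⊤ := by
      intro hT
      have := (S.hWI f hfp hfc (S.prob_f hfp hfi hf1)).trans hI
      rw [hT] at this
      exact absurd ha (not_lt.2 this)
    have h8 := S.est hfp hfc hfi hf1 hfρ hT
    rw [hL0, zero_mul, nonpos_iff_eq_zero, ENNReal.ofReal_eq_zero] at h8
    have h9 : m - ∫ x, f x * ρ x ∂μ = 0 := abs_eq_zero.1 (le_antisymm h8 (abs_nonneg _))
    simp only [hfe] at h9
    rw [integral_add (S.rint.const_mul _) (hhρ.const_mul _), integral_const_mul,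
      integral_const_mul, ← S.hm] at h9
    have h10 : ∫ x, h x * ρ x ∂μ = b * m := by
      have : ε * (∫ x, h x * ρ x ∂μ - b * m) = 0 := by linarith
      rcases mul_eq_zero.1 this with h | h
      · exact absurd h he0.ne'
      · linarith
    have h11 : ∀ x, h x • (ρ x - m) = h x * ρ x - m * h x := fun x => by
      rw [smul_eq_mul]; ring
    simp only [h11]
    rw [integral_sub hhρ (hi.const_mul _), h10, integral_const_mul, ← hb]; ring
  have := ae_eq_zero_of_integral_contDiff_smul_eq_zero (f := fun x => ρ x - m)
    (S.rint.sub (integrable_const m)).locallyIntegrable main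
  filter_upwards [this] with x hx
  linarith

theorem Setup.est3 (S : Setup μ ρ m c L A α) {f : EE n → ℝ} (hf : ∀ x, 0 < f x)
    (hfc : ContDiff ℝ 1 f) (hfi : Integrable f μ) (hf1 : ∫ x, f x ∂μ = 1)
    (hfρ : Integrable (fun x => f x * ρ x) μ) {J : ℝ} (hJ0 : 0 ≤ J)
    (hJ : ∫⁻ x, ENNReal.ofReal (‖gradient (fun y => Real.sqrt (f y)) x‖ ^ 2) ∂μ ≤
      ENNReal.ofReal J) :
    m - ∫ x, f x * ρ x ∂μ ≤ A.toReal / 2 + J / 2 := by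
  by_cases hT : transportCost c (μ.withDensity fun x => ENNReal.ofReal (f x)) μ = ⊤
  · have h2 := (S.hWI f hf hfc (S.prob_f hf hfi hf1)).trans hJ
    rw [hT] at h2
    have h3 : α ⊤ ≠ ⊤ := ne_top_of_le_ne_top ENNReal.ofReal_ne_top h2
    have hL0 : L = 0 := by
      by_contra hL
      apply S.hAfin
      rw [S.hA]
      refine top_unique (le_iSup_of_le ⊤ ?_)
      rw [ENNReal.top_mul (by simp [hL]), ENNReal.top_sub h3]
    have h4 := S.const hL0
    have h5 : ∫ x, f x * ρ x ∂μ = ∫ x, f x * m ∂μ := by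
      refine integral_congr_ae ?_
      filter_upwards [h4] with x hx
      rw [hx]
    rw [h5, integral_mul_const, hf1]
    have : 0 ≤ A.toReal := ENNReal.toReal_nonneg
    linarith
  · exact S.est2 hf hfc hfi hf1 hfρ hJ0 hJ hT

theorem Setup.spectral (S : Setup μ ρ m c L A α) {φ : EE n → ℝ} (hφ : ContDiff ℝ (⊤ : ℕ∞) φ)
    (hc : HasCompactSupport φ) :
    (m - A.toReal / 2) * ∫ x, ∑ i, pd i φ x ^ 2 ∂μ ≤
      ∫ x, ∑ i, ∑ j, pd j (pd i φ) x ^ 2 ∂μ + ∫ x, ρ x * ∑ i, pd i φ x ^ 2 ∂μ := by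
  have := S.prob
  have hp : ∀ i, ContDiff ℝ (⊤ : ℕ∞) (pd i φ) := fun i => pd_smooth i hφ
  have hp1 : ∀ i, ContDiff ℝ 1 (pd i φ) := fun i => (hp i).of_le (by exact_mod_cast le_top)
  set q : EE n → ℝ := fun x => ∑ i, pd i φ x ^ 2 with hq
  have hqC : ContDiff ℝ 1 q := ContDiff.sum fun i _ => (hp1 i).pow 2
  have hqc : HasCompactSupport q := by
    refine HasCompactSupport.intro (K := tsupport φ) hc fun x hx => ?_
    have h1 : ∀ i, pd i φ x = 0 := fun i => by
      by_contra h
      exact hx (tsupport_fderiv_subset ℝ (subset_tsupport _ (a := x) (by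
        intro h0; apply h; simp [pd, h0])))
    simp [hq, h1]
  have hq0 : ∀ x, 0 ≤ q x := fun x => by simp only [hq]; positivity
  have hqi : Integrable q μ := bdd_int hqC.continuous hqc
  obtain ⟨B, hB⟩ := hqC.continuous.bounded_above_of_compact_support hqc
  have hqρ : Integrable (fun x => q x * ρ x) μ :=
    S.rint.bdd_mul hqC.continuous.aestronglyMeasurable (Filter.Eventually.of_forall hB)
  have hHi : Integrable (fun x => ∑ i, ∑ j, pd j (pd i φ) x ^ 2) μ :=
    integrable_finsetSum _ fun i _ => integrable_finsetSum _ fun j _ =>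
      bdd_int ((pd_continuous j (hp1 i)).pow 2) (by
        simp only [sq]; exact (pd_compact j (pd_compact i hc)).mul_right)
  set H := ∫ x, ∑ i, ∑ j, pd j (pd i φ) x ^ 2 ∂μ with hH
  have hH0 : 0 ≤ H := integral_nonneg fun x => by positivity
  set Q := ∫ x, q x ∂μ with hQ
  have hQ0 : 0 ≤ Q := integral_nonneg hq0
  have hA0 : 0 ≤ A.toReal := ENNReal.toReal_nonneg
  have eR : ∫ x, ρ x * q x ∂μ = ∫ x, q x * ρ x ∂μ := by simp only [mul_comm]
  have step : ∀ δ : ℝ, 0 < δ → m * Q - ∫ x, ρ x * q x ∂μ ≤ A.toReal / 2 * (Q + δ) + H / 2 := by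
    intro δ hδ
    have hZ : 0 < Q + δ := by linarith
    set f : EE n → ℝ := fun x => (Q + δ)⁻¹ * (q x + δ) with hf
    have hfp : ∀ x, 0 < f x := fun x => by have := hq0 x; simp only [hf]; positivity
    have hfc : ContDiff ℝ 1 f := contDiff_const.mul (hqC.add contDiff_const)
    have hfi : Integrable f μ := (hqi.add (integrable_const _)).const_mul _
    have hf1 : ∫ x, f x ∂μ = 1 := by
      simp only [hf]
      rw [integral_const_mul, integral_add hqi (integrable_const _)]
      simp only [integral_const, probReal_univ, one_smul, ← hQ]
      exact inv_mul_cancel₀ hZ.ne'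
    have hfe : ∀ x, f x * ρ x = (Q + δ)⁻¹ * (q x * ρ x) + (Q + δ)⁻¹ * δ * ρ x := fun x => by
      simp only [hf]; ring
    have hfρ : Integrable (fun x => f x * ρ x) μ := by
      simp only [hfe]
      exact (hqρ.const_mul _).add (S.rint.const_mul _)
    have hI : ∫⁻ x, ENNReal.ofReal (‖gradient (fun y => Real.sqrt (f y)) x‖ ^ 2) ∂μ ≤
        ENNReal.ofReal ((Q + δ)⁻¹ * H) := by
      have e : ∀ j x, pd j f x = (Q + δ)⁻¹ * (2 * ∑ i, pd i φ x * pd j (pd i φ) x) := by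
        intro j x
        have e1 : pd j f x = (Q + δ)⁻¹ * pd j q x := by
          simp only [hf, pd]
          rw [fderiv_const_mul ((hqC.differentiable one_ne_zero x).add_const δ),
            fderiv_add_const]
          simp
        have e2 : pd j q x = ∑ i, pd j (fun y => pd i φ y ^ 2) x :=
          pd_sum Finset.univ j (f := fun i y => pd i φ y ^ 2) (fun i => (hp1 i).pow 2) x
        rw [e1, e2, Finset.mul_sum (a := (2:ℝ))]
        congr 1
        refine Finset.sum_congr rfl fun i _ => ?_
        simp only [sq]
        rw [pd_mul j (hp1 i) (hp1 i)]; ring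
      calc ∫⁻ x, ENNReal.ofReal (‖gradient (fun y => Real.sqrt (f y)) x‖ ^ 2) ∂μ
          ≤ ∫⁻ x, ENNReal.ofReal ((Q + δ)⁻¹ * ∑ i, ∑ j, pd j (pd i φ) x ^ 2) ∂μ := by
            refine lintegral_mono fun x => ENNReal.ofReal_le_ofReal ?_
            rw [grad_sqrt hfc x (hfp x), div_le_iff₀ (by linarith [hfp x])]
            have cs : ∑ j, (∑ i, pd i φ x * pd j (pd i φ) x) ^ 2 ≤
                q x * ∑ i, ∑ j, pd j (pd i φ) x ^ 2 := by
              rw [Finset.sum_comm (f := fun i j => pd j (pd i φ) x ^ 2), Finset.mul_sum]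
              refine Finset.sum_le_sum fun j _ => ?_
              exact Finset.sum_mul_sq_le_sq_mul_sq _ _ _
            have h0 : 0 ≤ ∑ i, ∑ j, pd j (pd i φ) x ^ 2 := by positivity
            simp only [e, mul_pow, ← Finset.mul_sum]
            rw [show f x = (Q + δ)⁻¹ * (q x + δ) from rfl]
            generalize ∑ i, ∑ j, pd j (pd i φ) x ^ 2 = h at *
            generalize ∑ j, (∑ i, pd i φ x * pd j (pd i φ) x) ^ 2 = s at *
            have : (Q + δ)⁻¹ * h * (4 * ((Q + δ)⁻¹ * (q x + δ))) -
                (Q + δ)⁻¹ ^ 2 * (2 ^ 2 * s) =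
                4 * (Q + δ)⁻¹ ^ 2 * ((q x * h - s) + δ * h) := by ring
            have h2 : 0 ≤ 4 * (Q + δ)⁻¹ ^ 2 * ((q x * h - s) + δ * h) :=
              mul_nonneg (by positivity) (add_nonneg (by linarith) (by positivity))
            linarith
        _ = ENNReal.ofReal ((Q + δ)⁻¹ * H) := by
            rw [← ofReal_integral_eq_lintegral_ofReal (hHi.const_mul _)
              (Filter.Eventually.of_forall fun x => by positivity), integral_const_mul]
    have h1 := S.est3 hfp hfc hfi hf1 hfρ (by positivity) hI
    simp only [hfe] at h1
    rw [integral_add (hqρ.const_mul _) (S.rint.const_mul _), integral_const_mul,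
      integral_const_mul, ← S.hm, ← eR] at h1
    have h2 := mul_le_mul_of_nonneg_left h1 hZ.le
    field_simp at h2
    linarith
  have fin : m * Q - ∫ x, ρ x * q x ∂μ ≤ A.toReal / 2 * Q + H / 2 := by
    refine le_of_forall_pos_le_add fun ε hε => ?_
    have h1 := step (ε / (A.toReal / 2 + 1)) (by positivity)
    have h2 : A.toReal / 2 * (ε / (A.toReal / 2 + 1)) ≤ ε := by
      rw [← mul_div_assoc, div_le_iff₀ (by positivity)]; nlinarith
    linarith
  linarith

end

open MeasureTheory Real Set
open scoped ENNReal RealInnerProductSpace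

theorem gen_add {n : ℕ} {W φ ψ : EE n → ℝ} (hφ : ContDiff ℝ (⊤ : ℕ∞) φ)
    (hψ : ContDiff ℝ (⊤ : ℕ∞) ψ) (x : EE n) :
    gen W (fun y => φ y + ψ y) x = gen W φ x + gen W ψ x := by
  have h1 : ∀ {f : EE n → ℝ}, ContDiff ℝ (⊤ : ℕ∞) f → ContDiff ℝ 1 f :=
    fun h => h.of_le (by exact_mod_cast le_top)
  have e : ∀ i, pd i (fun y => φ y + ψ y) = fun y => pd i φ y + pd i ψ y :=
    fun i => funext fun y => pd_add i (h1 hφ) (h1 hψ) y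
  simp only [gen, e, ← Finset.sum_add_distrib]
  refine Finset.sum_congr rfl fun i _ => ?_
  rw [pd_add i (h1 (pd_smooth i hφ)) (h1 (pd_smooth i hψ))]; ring

theorem gen_smul {n : ℕ} {W φ : EE n → ℝ} (hφ : ContDiff ℝ (⊤ : ℕ∞) φ) (t : ℝ) (x : EE n) :
    gen W (fun y => t * φ y) x = t * gen W φ x := by
  have h1 : ∀ {f : EE n → ℝ}, ContDiff ℝ (⊤ : ℕ∞) f → ∀ i y,
      pd i (fun y => t * f y) y = t * pd i f y := by
    intro f h i y
    have := (h.of_le (by exact_mod_cast le_top) : ContDiff ℝ 1 f).differentiable one_ne_zero y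
    simp only [pd]
    rw [fderiv_const_mul this]; simp
  have e : ∀ i, pd i (fun y => t * φ y) = fun y => t * pd i φ y :=
    fun i => funext fun y => h1 hφ i y
  simp only [gen, e, Finset.mul_sum]
  refine Finset.sum_congr rfl fun i _ => ?_
  rw [h1 (pd_smooth i hφ)]; ring

section
variable {n : ℕ} {W : EE n → ℝ} {μ : Measure (EE n)}

theorem mu_int (hW : ContDiff ℝ 2 W)
    (hμ : μ = volume.withDensity fun x => ENNReal.ofReal (Real.exp (-W x))) (F : EE n → ℝ) :
    ∫ x, F x ∂μ = ∫ x, F x * Real.exp (-W x) := by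
  have hm : Measurable fun x => ENNReal.ofReal (Real.exp (-W x)) :=
    (hW.continuous.neg.rexp).measurable.ennreal_ofReal
  rw [hμ, integral_withDensity_eq_integral_toReal_smul hm
    (Filter.Eventually.of_forall fun x => ENNReal.ofReal_lt_top)]
  refine integral_congr_ae (Filter.Eventually.of_forall fun x => ?_)
  simp only [smul_eq_mul]
  rw [ENNReal.toReal_ofReal (Real.exp_pos _).le, mul_comm]

theorem mu_integrable (hW : ContDiff ℝ 2 W)
    (hμ : μ = volume.withDensity fun x => ENNReal.ofReal (Real.exp (-W x))) {F : EE n → ℝ} :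
    Integrable F μ ↔ Integrable fun x => F x * Real.exp (-W x) := by
  have hm : Measurable fun x => ENNReal.ofReal (Real.exp (-W x)) :=
    (hW.continuous.neg.rexp).measurable.ennreal_ofReal
  rw [hμ, integrable_withDensity_iff_integrable_smul' hm
    (Filter.Eventually.of_forall fun x => ENNReal.ofReal_lt_top)]
  refine integrable_congr (Filter.Eventually.of_forall fun x => ?_)
  simp only [smul_eq_mul]
  rw [ENNReal.toReal_ofReal (Real.exp_pos _).le, mul_comm]

theorem bdd_memLp [IsFiniteMeasure μ] {h : EE n → ℝ} (hh : Continuous h)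
    (hc : HasCompactSupport h) : MemLp h 2 μ := by
  obtain ⟨C, hC⟩ := hh.bounded_above_of_compact_support hc
  exact MemLp.of_bound hh.aestronglyMeasurable C (Filter.Eventually.of_forall hC)

noncomputable def genS (W : EE n → ℝ) (μ : Measure (EE n)) : Submodule ℝ (Lp ℝ 2 μ) where
  carrier := {v | ∃ φ : EE n → ℝ, ContDiff ℝ (⊤ : ℕ∞) φ ∧ HasCompactSupport φ ∧ v =ᵐ[μ] gen W φ}
  zero_mem' := by
    refine ⟨fun _ => 0, contDiff_const, HasCompactSupport.zero, ?_⟩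
    have h : ∀ x, gen W (fun _ => 0) x = 0 := fun x => by
      have e : ∀ i, pd i (fun _ : EE n => (0:ℝ)) = fun _ => 0 := fun i => by
        funext y; simp [pd]
      simp [gen, e]
    filter_upwards [Lp.coeFn_zero ℝ 2 μ] with x hx
    rw [hx, h]; rfl
  add_mem' := by
    rintro v w ⟨φ, h1, h2, h3⟩ ⟨ψ, k1, k2, k3⟩
    refine ⟨fun x => φ x + ψ x, h1.add k1, h2.add k2, ?_⟩
    filter_upwards [h3, k3, Lp.coeFn_add v w] with x a b c
    rw [c, Pi.add_apply, a, b, gen_add h1 k1]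
  smul_mem' := by
    rintro t v ⟨φ, h1, h2, h3⟩
    refine ⟨fun x => t * φ x, contDiff_const.mul h1, h2.mul_left, ?_⟩
    filter_upwards [h3, Lp.coeFn_smul t v] with x a c
    rw [c, Pi.smul_apply, a, gen_smul h1, smul_eq_mul]

theorem cs_grad [IsProbabilityMeasure μ] {g φ : EE n → ℝ} (hg : ContDiff ℝ 1 g)
    (hgc : HasCompactSupport g) (hφ : ContDiff ℝ 1 φ) (hφc : HasCompactSupport φ) :
    (∫ x, ∑ i, pd i g x * pd i φ x ∂μ) ^ 2 ≤
      (∫ x, ∑ i, pd i g x ^ 2 ∂μ) * ∫ x, ∑ i, pd i φ x ^ 2 ∂μ := by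
  have i1 : Integrable (fun x => ∑ i, pd i g x ^ 2) μ :=
    integrable_finsetSum _ fun i _ => bdd_int ((pd_continuous i hg).pow 2) (by
        simp only [sq]; exact (pd_compact i hgc).mul_right)
  have i2 : Integrable (fun x => ∑ i, pd i φ x ^ 2) μ :=
    integrable_finsetSum _ fun i _ => bdd_int ((pd_continuous i hφ).pow 2) (by
        simp only [sq]; exact (pd_compact i hφc).mul_right)
  have i3 : Integrable (fun x => ∑ i, pd i g x * pd i φ x) μ :=
    integrable_finsetSum _ fun i _ => bdd_int ((pd_continuous i hg).mul (pd_continuous i hφ))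
      (pd_compact i hgc).mul_right
  set G := ∫ x, ∑ i, pd i g x ^ 2 ∂μ
  set P := ∫ x, ∑ i, pd i φ x ^ 2 ∂μ
  set M := ∫ x, ∑ i, pd i g x * pd i φ x ∂μ
  have key : ∀ t : ℝ, 0 ≤ G * (t * t) + (2 * M) * t + P := by
    intro t
    have e : ∫ x, (t * t * (∑ i, pd i g x ^ 2) + 2 * t * (∑ i, pd i g x * pd i φ x) +
        ∑ i, pd i φ x ^ 2) ∂μ = t * t * G + 2 * t * M + P := by
      have j : Integrable (fun x => t * t * (∑ i, pd i g x ^ 2) +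
        2 * t * (∑ i, pd i g x * pd i φ x)) μ := (i1.const_mul _).add (i3.const_mul _)
      rw [integral_add j i2, integral_add (i1.const_mul _) (i3.const_mul _), integral_const_mul,
        integral_const_mul]
    have h0 : 0 ≤ ∫ x, (t * t * (∑ i, pd i g x ^ 2) + 2 * t * (∑ i, pd i g x * pd i φ x) +
        ∑ i, pd i φ x ^ 2) ∂μ := by
      refine integral_nonneg fun x => ?_
      simp only [Finset.mul_sum, ← Finset.sum_add_distrib]
      refine Finset.sum_nonneg fun i _ => ?_
      nlinarith [sq_nonneg (t * pd i g x + pd i φ x)]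
    linarith
  have := discrim_le_zero key
  unfold discrim at this
  nlinarith

theorem poincare_core [IsProbabilityMeasure μ] (hW : ContDiff ℝ 2 W)
    (hμ : μ = volume.withDensity fun x => ENNReal.ofReal (Real.exp (-W x)))
    {κ : ℝ} (hκ : 0 < κ)
    (hgap : ∀ φ : EE n → ℝ, ContDiff ℝ (⊤ : ℕ∞) φ → HasCompactSupport φ →
      κ * ∫ x, ∑ i, pd i φ x ^ 2 ∂μ ≤ ∫ x, gen W φ x ^ 2 ∂μ)
    {g : EE n → ℝ} (hg : ContDiff ℝ (⊤ : ℕ∞) g) (hgc : HasCompactSupport g) :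
    ∫ x, g x ^ 2 ∂μ - (∫ x, g x ∂μ) ^ 2 ≤ 1 / κ * ∫ x, ∑ i, pd i g x ^ 2 ∂μ := by
  have hg1 : ContDiff ℝ 1 g := hg.of_le (by exact_mod_cast le_top)
  set b := ∫ x, g x ∂μ with hb
  set G := ∫ x, ∑ i, pd i g x ^ 2 ∂μ with hG
  have hG0 : 0 ≤ G := integral_nonneg fun x => by positivity
  have hgi : Integrable g μ := bdd_int hg.continuous hgc
  have hg2i : Integrable (fun x => g x ^ 2) μ := bdd_int (hg.continuous.pow 2) (by
        simp only [sq]; exact hgc.mul_right)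
  have hm0 : MemLp (fun x => g x - b) 2 μ := (bdd_memLp hg.continuous hgc).sub (memLp_const b)
  set g₀ : Lp ℝ 2 μ := hm0.toLp with hg₀
  have hg₀e : g₀ =ᵐ[μ] fun x => g x - b := hm0.coeFn_toLp
  have hvar : ‖g₀‖ ^ 2 = ∫ x, g x ^ 2 ∂μ - b ^ 2 := by
    rw [← real_inner_self_eq_norm_sq, L2.inner_def]
    have : ∫ x, inner ℝ (g₀ x) (g₀ x) ∂μ = ∫ x, (g x ^ 2 - 2 * b * g x + b ^ 2) ∂μ := by
      refine integral_congr_ae ?_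
      filter_upwards [hg₀e] with x hx
      rw [hx]; simp only [RCLike.inner_apply, conj_trivial]; ring
    have j : Integrable (fun x => g x ^ 2 - 2 * b * g x) μ := hg2i.sub (hgi.const_mul _)
    rw [this, integral_add j (integrable_const _), integral_sub hg2i (hgi.const_mul _),
      integral_const_mul, ← hb]
    simp; ring
  have hmean : ∫ x, (g x - b) ∂μ = 0 := by
    rw [integral_sub hgi (integrable_const _)]; simp [← hb]
  have hac : μ ≪ volume := hμ ▸ withDensity_absolutelyContinuous _ _
  have hcl : g₀ ∈ (genS W μ).topologicalClosure := by
    rw [← Submodule.orthogonal_orthogonal_eq_closure, Submodule.mem_orthogonal]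
    intro u hu
    rw [Submodule.mem_orthogonal] at hu
    obtain ⟨k, hk⟩ := liouville (u := u) hW (Lp.stronglyMeasurable u).measurable
      ((mu_integrable hW hμ).1 (Lp.memLp u).integrable_sq) (by
        intro φ hφ hφc
        have hφ3 : ContDiff ℝ 3 φ := by exact_mod_cast contDiff_infty.1 hφ 3
        have hL : MemLp (gen W φ) 2 μ := bdd_memLp (gen_contDiff hW hφ3).continuous
          (gen_compact hφc)
        have h1 := hu hL.toLp ⟨φ, hφ, hφc, hL.coeFn_toLp⟩
        rw [L2.inner_def] at h1
        rw [← mu_int hW hμ (fun x => u x * gen W φ x), ← h1]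
        refine integral_congr_ae ?_
        filter_upwards [hL.coeFn_toLp] with x hx
        rw [hx]; simp)
    rw [L2.inner_def]
    have : ∫ x, inner ℝ (u x) (g₀ x) ∂μ = ∫ x, k * (g x - b) ∂μ := by
      refine integral_congr_ae ?_
      filter_upwards [hg₀e, hac.ae_le hk] with x hx hx2
      rw [hx, hx2]; simp [mul_comm]
    rw [this, integral_const_mul, hmean, mul_zero]
  set C := Real.sqrt (G / κ) with hC
  have hC2 : C ^ 2 = G / κ := Real.sq_sqrt (by positivity)
  have hC0 : 0 ≤ C := Real.sqrt_nonneg _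
  have hclosed : IsClosed {v : Lp ℝ 2 μ | inner ℝ g₀ v ≤ C * ‖v‖} :=
    isClosed_le (by fun_prop) (by fun_prop)
  have hsub : ((genS W μ : Submodule ℝ (Lp ℝ 2 μ)) : Set (Lp ℝ 2 μ)) ⊆
      {v : Lp ℝ 2 μ | inner ℝ g₀ v ≤ C * ‖v‖} := by
    rintro v ⟨φ, hφ, hφc, hv⟩
    have hφ2 : ContDiff ℝ 2 φ := by exact_mod_cast contDiff_infty.1 hφ 2
    have hφ1 : ContDiff ℝ 1 φ := hφ.of_le (by exact_mod_cast le_top)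
    have hn : ‖v‖ ^ 2 = ∫ x, gen W φ x ^ 2 ∂μ := by
      rw [← real_inner_self_eq_norm_sq, L2.inner_def]
      refine integral_congr_ae ?_
      filter_upwards [hv] with x hx
      rw [hx]; simp [sq]
    have hin : inner ℝ g₀ v = - ∫ x, ∑ i, pd i g x * pd i φ x ∂μ := by
      rw [L2.inner_def]
      have e1 : ∫ x, inner ℝ (g₀ x) (v x) ∂μ = ∫ x, (g x - b) * gen W φ x ∂μ := by
        refine integral_congr_ae ?_
        filter_upwards [hv, hg₀e] with x hx hx2
        rw [hx, hx2]; simp [mul_comm]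
      rw [e1, mu_int hW hμ, mu_int hW hμ,
        gen_ibp (f := fun x => g x - b) hW hφ2 hφc (hg1.sub contDiff_const)]
      simp [pd, fderiv_sub_const]
    have hcs := cs_grad (μ := μ) hg1 hgc hφ1 hφc
    have hgp := hgap φ hφ hφc
    rw [← hn] at hgp
    rw [mem_ofPred_eq, hin]
    refine le_of_abs_le (abs_le_of_sq_le_sq ?_ (by positivity)) 
    rw [neg_sq, mul_pow, hC2]
    refine hcs.trans ?_
    rw [div_mul_eq_mul_div, le_div_iff₀ hκ, mul_assoc]
    refine mul_le_mul_of_nonneg_left ?_ hG0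
    linarith
  have hfin : inner ℝ g₀ g₀ ≤ C * ‖g₀‖ := closure_minimal hsub hclosed hcl
  rw [real_inner_self_eq_norm_sq] at hfin
  rw [← hvar]
  have h1 : ‖g₀‖ ≤ C := by
    by_contra h
    push Not at h
    nlinarith [norm_nonneg g₀]
  calc ‖g₀‖ ^ 2 ≤ C ^ 2 := by gcongr
    _ = 1 / κ * G := by rw [hC2]; ring

end

open MeasureTheory Real Set
open scoped ENNReal RealInnerProductSpace

/-- Poincaré inequality with constant `1/(m - α*(2L)/2)` from a
transport-information inequality, via the Legendre transform of `α`. -/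
theorem stmt_2 {n : ℕ} (V ρ : EuclideanSpace ℝ (Fin n) → ℝ)
    (hV : ContDiff ℝ 2 V) (hVint : Integrable (fun x => Real.exp (-V x)))
    (μ : Measure (EuclideanSpace ℝ (Fin n)))
    (hμ : μ = volume.withDensity
      (fun x => ENNReal.ofReal (Real.exp (-V x) / ∫ y, Real.exp (-V y))))
    (hρcont : Continuous ρ)
    (hHess : ∀ x u, ρ x * ‖u‖ ^ 2 ≤ iteratedFDeriv ℝ 2 V x ![u, u])
    (ρ₀ : ℝ) (hρ₀ : ∀ x, ρ₀ ≤ ρ x)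
    (m : ℝ) (hm : m = ∫ x, ρ x ∂μ) (hmpos : 0 < m)
    (c : EuclideanSpace ℝ (Fin n) → EuclideanSpace ℝ (Fin n) → ℝ≥0∞)
    (hclsc : LowerSemicontinuous
      (fun p : EuclideanSpace ℝ (Fin n) × EuclideanSpace ℝ (Fin n) => c p.1 p.2))
    (hcsymm : ∀ x y, c x y = c y x) (hcdiag : ∀ x, c x x = 0)
    (L : ℝ≥0∞) (hLdef : L = costLipNorm c ρ) (hLfin : L ≠ ⊤)
    (α : ℝ≥0∞ → ℝ≥0∞) (hαcont : Continuous α) (hαmono : StrictMono α)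
    (hα0 : α 0 = 0) (hαfin : ∀ s, s ≠ ⊤ → α s ≠ ⊤)
    (hWI : ∀ f : EuclideanSpace ℝ (Fin n) → ℝ, (∀ x, 0 < f x) → ContDiff ℝ 1 f →
      IsProbabilityMeasure (μ.withDensity fun x => ENNReal.ofReal (f x)) →
      α (transportCost c (μ.withDensity fun x => ENNReal.ofReal (f x)) μ) ≤
        ∫⁻ x, ENNReal.ofReal (‖gradient (fun y => Real.sqrt (f y)) x‖ ^ 2) ∂μ)
    (A : ℝ≥0∞) (hAdef : A = ⨆ r : ℝ≥0∞, r * (2 * L) - α r)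
    (hcond : A / 2 < ENNReal.ofReal m) :
    ∀ g : EuclideanSpace ℝ (Fin n) → ℝ, ContDiff ℝ (⊤ : ℕ∞) g → HasCompactSupport g →
      ∫ x, g x ^ 2 ∂μ - (∫ x, g x ∂μ) ^ 2 ≤
        (1 / (m - A.toReal / 2)) * ∫ x, ‖gradient g x‖ ^ 2 ∂μ := by
  intro g hg hgc
  have hAfin : A ≠ ⊤ := by
    rintro rfl
    rw [ENNReal.top_div_of_ne_top (by simp)] at hcond
    exact absurd hcond (by simp)
  have hκ : 0 < m - A.toReal / 2 := by
    have := (ENNReal.lt_ofReal_iff_toReal_lt (by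
      exact (ENNReal.div_lt_top hAfin (by simp)).ne)).1 hcond
    rw [ENNReal.toReal_div] at this
    simp at this
    linarith
  set Z := ∫ y, Real.exp (-V y) with hZ
  have hZ0 : 0 < Z := integral_exp_pos hVint
  set W : EE n → ℝ := fun x => V x + Real.log Z with hWdef
  have hW : ContDiff ℝ 2 W := hV.add contDiff_const
  have hexp : ∀ x, Real.exp (-W x) = Real.exp (-V x) / Z := fun x => by
    simp only [hWdef]
    rw [neg_add, Real.exp_add, Real.exp_neg (Real.log Z), Real.exp_log hZ0]; rfl
  have hμ' : μ = volume.withDensity fun x => ENNReal.ofReal (Real.exp (-W x)) := by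
    rw [hμ]; simp only [hexp]
  have hpW : ∀ i, pd i W = pd i V := fun i => by
    funext x; simp only [pd, hWdef, fderiv_add_const]
  have hprob : IsProbabilityMeasure μ := by
    constructor
    rw [hμ, withDensity_apply _ MeasurableSet.univ, Measure.restrict_univ,
      ← ofReal_integral_eq_lintegral_ofReal (hVint.div_const _)
        (Filter.Eventually.of_forall fun x => by positivity), integral_div, ← hZ,
        div_self hZ0.ne']
    simp
  have hρi : Integrable ρ μ := by
    by_contra h
    rw [integral_undef h] at hm
    exact hmpos.ne' hm
  have S : Setup μ ρ m c L A α := ⟨hprob, hρi, hm, hclsc.measurable, hLdef, hLfin, hαmono, hWI,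
    hAdef, hAfin⟩
  have hfin := poincare_core hW hμ' hκ (by
    intro φ hφ hφc
    have hφ3 : ContDiff ℝ 3 φ := by exact_mod_cast contDiff_infty.1 hφ 3
    refine (S.spectral hφ hφc).trans ?_
    have hp1 : ∀ i, ContDiff ℝ 1 (pd i φ) := fun i =>
      (pd_smooth i hφ).of_le (by exact_mod_cast le_top)
    have hpc := fun i => pd_continuous i (hp1 i)
    have hHi : Integrable (fun x => ∑ i, ∑ j, pd j (pd i φ) x ^ 2) μ :=
      integrable_finsetSum _ fun i _ => integrable_finsetSum _ fun j _ =>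
        bdd_int ((pd_continuous j (hp1 i)).pow 2) (by
          simp only [sq]; exact (pd_compact j (pd_compact i hφc)).mul_right)
    have hRi : Integrable (fun x => ρ x * ∑ i, pd i φ x ^ 2) μ := by
      simp only [Finset.mul_sum]
      refine integrable_finsetSum _ fun i _ => bdd_int
        (hρcont.mul ((hp1 i).continuous.pow 2)) ?_
      simp only [sq]; exact (pd_compact i hφc).mul_right.mul_left
    have hWi : Integrable (fun x => ∑ i, ∑ j, pd i φ x * pd j φ x * pd i (pd j W) x) μ :=
      integrable_finsetSum _ fun i _ => integrable_finsetSum _ fun j _ =>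
        bdd_int (((hp1 i).continuous.mul (hp1 j).continuous).mul
          (pd_continuous i (pd_contDiff j hW (by norm_num))))
          ((pd_compact i hφc).mul_right.mul_right)
    rw [mu_int hW hμ' (fun x => gen W φ x ^ 2), bochner hW hφ3 hφc, ← mu_int hW hμ'
      (fun x => (∑ i, ∑ j, pd j (pd i φ) x ^ 2)
        + ∑ i, ∑ j, pd i φ x * pd j φ x * pd i (pd j W) x), integral_add hHi hWi]
    refine add_le_add le_rfl ?_
    refine integral_mono hRi hWi fun x => ?_
    have h := hHess x (gradient φ x)
    rw [norm_gradient_sq, pd_pd_eq hV] at h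
    simpa only [gradient_apply_pd, hpW] using h) hg hgc
  simpa only [norm_gradient_sq] using hfin
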